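/- arXiv:2502.02099 — 14 statements merged into one kernel-verified Lean document; each statement's English description precedes it below -/
import Mathlib

section
/- If a matrix X ∈ S^d satisfies the second-order necessary conditions (2NC) for problem (BC), then every matrix F ∈ R^{d×d} with FF^T = X satisfies the second-order necessary conditions (2NC) for problem (DSS). -/
open Matrix

/-- `P` is the Moore–Penrose pseudoinverse of `X`. -/
def IsMoorePenrose {d : ℕ} (X P : Matrix (Fin d) (Fin d) ℝ) : Prop :=
  X * P * X = X ∧ P * X * P = P ∧ (X * P)ᵀ = X * P ∧ (P * X)ᵀ = P * X

/-- Second directional derivative `D²h_X[W,W]` of `h` at `X` along `W`. -/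
noncomputable def D2 {d : ℕ} (h : Matrix (Fin d) (Fin d) ℝ → ℝ)
    (X W : Matrix (Fin d) (Fin d) ℝ) : ℝ :=
  iteratedDeriv 2 (fun t : ℝ => h (X + t • W)) 0

/-- `gh` is the gradient of `h` on the space `S^d` of symmetric matrices, with respect to
the trace inner product `⟨A, B⟩ = tr(AᵀB)`. -/
def IsGradient {d : ℕ} (h : Matrix (Fin d) (Fin d) ℝ → ℝ)
    (gh : Matrix (Fin d) (Fin d) ℝ → Matrix (Fin d) (Fin d) ℝ) : Prop :=
  (∀ X : Matrix (Fin d) (Fin d) ℝ, X.IsSymm → (gh X).IsSymm) ∧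
  ∀ X W : Matrix (Fin d) (Fin d) ℝ, X.IsSymm → W.IsSymm →
    HasDerivAt (fun t : ℝ => h (X + t • W)) ((gh X)ᵀ * W).trace 0

/-- First-order conditions (BC-1C): `X ⪰ 0`, `∇h(X) ⪰ 0`, `∇h(X)X = 0`. -/
def BC1C {d : ℕ} (gh : Matrix (Fin d) (Fin d) ℝ → Matrix (Fin d) (Fin d) ℝ)
    (X : Matrix (Fin d) (Fin d) ℝ) : Prop :=
  X.PosSemidef ∧ (gh X).PosSemidef ∧ gh X * X = 0

/-- Second-order necessary conditions (BC-2NC). -/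
def BC2NC {d : ℕ} (h : Matrix (Fin d) (Fin d) ℝ → ℝ)
    (gh : Matrix (Fin d) (Fin d) ℝ → Matrix (Fin d) (Fin d) ℝ)
    (X : Matrix (Fin d) (Fin d) ℝ) : Prop :=
  BC1C gh X ∧
    ∀ V : Matrix (Fin d) (Fin (d - X.rank)) ℝ, Vᵀ * V = 1 → X * V = 0 →
      ∀ P : Matrix (Fin d) (Fin d) ℝ, IsMoorePenrose X P →
        ∀ W : Matrix (Fin d) (Fin d) ℝ, W.IsSymm → Vᵀ * W * V = 0 →
          0 ≤ D2 h X W + 2 * (W * P * W * gh X).trace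

/-- Second-order necessary conditions (DSS-2NC) for `g(F) = h(FFᵀ)`. -/
def DSS2NC {d : ℕ} (h : Matrix (Fin d) (Fin d) ℝ → ℝ)
    (gh : Matrix (Fin d) (Fin d) ℝ → Matrix (Fin d) (Fin d) ℝ)
    (F : Matrix (Fin d) (Fin d) ℝ) : Prop :=
  gh (F * Fᵀ) * F = 0 ∧
    ∀ Δ : Matrix (Fin d) (Fin d) ℝ,
      0 ≤ D2 h (F * Fᵀ) (F * Δᵀ + Δ * Fᵀ) + 2 * (gh (F * Fᵀ) * Δ * Δᵀ).trace

/-- Spectral decomposition of a symmetric real matrix, in elementary form. -/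
lemma exists_spectral {d : ℕ} (X : Matrix (Fin d) (Fin d) ℝ) (hX : X.IsSymm) :
    ∃ (U : Matrix (Fin d) (Fin d) ℝ) (e : Fin d → ℝ), Uᵀ * U = 1 ∧ U * Uᵀ = 1 ∧
      X = U * diagonal e * Uᵀ := by
  have hH : X.IsHermitian := by
    rw [Matrix.IsHermitian, conjTranspose_eq_transpose_of_trivial]; exact hX
  refine ⟨hH.eigenvectorUnitary, hH.eigenvalues, ?_, ?_, ?_⟩
  · have := Unitary.coe_star_mul_self hH.eigenvectorUnitary
    simpa [star_eq_conjTranspose, conjTranspose_eq_transpose_of_trivial] using this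
  · have := Unitary.coe_mul_star_self hH.eigenvectorUnitary
    simpa [star_eq_conjTranspose, conjTranspose_eq_transpose_of_trivial] using this
  · have := hH.spectral_theorem
    rw [Unitary.conjStarAlgAut_apply] at this
    simpa [star_eq_conjTranspose, conjTranspose_eq_transpose_of_trivial,
      Function.comp_def] using this

lemma exists_mp {d : ℕ} (X : Matrix (Fin d) (Fin d) ℝ) (hX : X.IsSymm) :
    ∃ P, IsMoorePenrose X P ∧ Pᵀ = P := by
  obtain ⟨U, e, h1, h2, rfl⟩ := exists_spectral X hX
  have key : ∀ a b : Fin d → ℝ, (U * diagonal a * Uᵀ) * (U * diagonal b * Uᵀ)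
      = U * diagonal (fun i => a i * b i) * Uᵀ := by
    intro a b
    calc _ = U * diagonal a * (Uᵀ * U) * diagonal b * Uᵀ := by simp only [Matrix.mul_assoc]
      _ = _ := by rw [h1, Matrix.mul_one, Matrix.mul_assoc U, diagonal_mul_diagonal]
  have ht : ∀ a : Fin d → ℝ, (U * diagonal a * Uᵀ)ᵀ = U * diagonal a * Uᵀ := by
    intro a
    simp [Matrix.transpose_mul, Matrix.mul_assoc]
  refine ⟨U * diagonal (fun i => (e i)⁻¹) * Uᵀ, ⟨?_, ?_, ?_, ?_⟩, ht _⟩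
  · simp only [key, mul_inv_mul_cancel]
  · simp only [key]
    congr! 4 with i
    by_cases h : e i = 0 <;> simp [h]
  · simp only [key, ht]
  · simp only [key, ht]

lemma exists_null {d : ℕ} (X : Matrix (Fin d) (Fin d) ℝ) (hX : X.IsSymm) :
    ∃ V : Matrix (Fin d) (Fin (d - X.rank)) ℝ, Vᵀ * V = 1 ∧ X * V = 0 := by
  obtain ⟨U, e, h1, h2, hE⟩ := exists_spectral X hX
  have hU : IsUnit U.det := by
    have := congrArg det h2
    rw [det_mul, det_one] at this
    exact IsUnit.of_mul_eq_one _ this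
  have hU' : IsUnit Uᵀ.det := by rwa [det_transpose]
  have hr : X.rank = Fintype.card {i // e i ≠ 0} := by
    rw [hE, rank_mul_eq_left_of_isUnit_det _ _ hU', rank_mul_eq_right_of_isUnit_det _ _ hU,
      rank_diagonal]
  have hc : Fintype.card {i // e i = 0} = d - X.rank := by
    have := Fintype.card_subtype_compl (fun i => e i = 0)
    have h3 := Fintype.card_subtype_le (fun i => e i = 0)
    simp only [Fintype.card_fin] at this h3
    simp only [ne_eq] at hr
    omega
  let f := (Fintype.equivFinOfCardEq hc).symm
  refine ⟨U.submatrix id (fun j => (f j : Fin d)), ?_, ?_⟩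
  · ext i j
    have := congrFun (congrFun h1 (f i)) (f j)
    simp only [Matrix.mul_apply, transpose_apply, submatrix_apply, id] at this ⊢
    rw [this, Matrix.one_apply, Matrix.one_apply]
    congr 1
    simp [Subtype.ext_iff.symm]
  · have hXU : X * U = U * diagonal e := by
      rw [hE, Matrix.mul_assoc, h1, Matrix.mul_one]
    ext i j
    have := congrFun (congrFun hXU i) (f j)
    rw [mul_diagonal, (f j).2, mul_zero] at this
    simpa [Matrix.mul_apply] using this

lemma mul_eq_zero_of_gram {d m : ℕ} (A : Matrix (Fin m) (Fin d) ℝ) (h : A * Aᵀ = 0) : A = 0 := by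
  rw [← conjTranspose_eq_transpose_of_trivial] at h
  exact self_mul_conjTranspose_eq_zero.mp h

/-- If `X ∈ S^d` satisfies 2NC for (BC), then every `F ∈ ℝ^{d×d}` with `FFᵀ = X`
satisfies 2NC for (DSS). -/
theorem statement0 {d : ℕ} (h : Matrix (Fin d) (Fin d) ℝ → ℝ)
    (gh : Matrix (Fin d) (Fin d) ℝ → Matrix (Fin d) (Fin d) ℝ)
    (hsm : ContDiff ℝ 2 (fun A : Fin d → Fin d → ℝ => h (Matrix.of A)))
    (hgrad : IsGradient h gh)
    (X : Matrix (Fin d) (Fin d) ℝ) (hXsymm : X.IsSymm)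
    (hX : BC2NC h gh X)
    (F : Matrix (Fin d) (Fin d) ℝ) (hF : F * Fᵀ = X) :
    DSS2NC h gh F := by
  obtain ⟨⟨-, hG, hGX⟩, h2⟩ := hX
  obtain ⟨V, hV1, hV2⟩ := exists_null X hXsymm
  obtain ⟨P, hP, hPs⟩ := exists_mp X hXsymm
  have hGs : (gh X)ᵀ = gh X := hgrad.1 X hXsymm
  unfold DSS2NC
  rw [hF]
  generalize gh X = G at *
  have hGF : G * F = 0 := by
    apply mul_eq_zero_of_gram
    rw [transpose_mul, Matrix.mul_assoc, ← Matrix.mul_assoc F, hF, ← Matrix.mul_assoc, hGX,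
      Matrix.zero_mul]
  have hFG : Fᵀ * G = 0 := by
    have := congrArg transpose hGF
    rwa [transpose_mul, hGs, transpose_zero] at this
  have hVF : Vᵀ * F = 0 := by
    apply mul_eq_zero_of_gram
    rw [transpose_mul, transpose_transpose, Matrix.mul_assoc, ← Matrix.mul_assoc F, hF, hV2,
      Matrix.mul_zero]
  have hFV : Fᵀ * V = 0 := by
    have := congrArg transpose hVF
    rwa [transpose_mul, transpose_transpose, transpose_zero] at this
  refine ⟨hGF, fun Δ => ?_⟩
  have hmain := h2 V hV1 hV2 P hP (F * Δᵀ + Δ * Fᵀ)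
    (by simp [Matrix.IsSymm, transpose_mul, add_comm])
    (by rw [Matrix.mul_add, Matrix.add_mul, ← Matrix.mul_assoc, hVF]
        simp [Matrix.mul_assoc, hFV])
  have hWG : (F * Δᵀ + Δ * Fᵀ) * G = F * Δᵀ * G := by
    rw [Matrix.add_mul, Matrix.mul_assoc Δ, hFG, Matrix.mul_zero, add_zero]
  have hGW : G * (F * Δᵀ + Δ * Fᵀ) = G * Δ * Fᵀ := by
    rw [Matrix.mul_add, ← Matrix.mul_assoc, hGF, Matrix.zero_mul, zero_add, Matrix.mul_assoc]
  set Q := Fᵀ * P * F with hQ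
  have ht : ((F * Δᵀ + Δ * Fᵀ) * P * (F * Δᵀ + Δ * Fᵀ) * G).trace = (G * Δ * Q * Δᵀ).trace := by
    rw [Matrix.mul_assoc _ _ G, hWG, ← Matrix.mul_assoc, trace_mul_comm]
    simp only [← Matrix.mul_assoc]
    rw [hGW, hQ]
    simp only [Matrix.mul_assoc]
  have hQs : Qᵀ = Q := by simp [hQ, transpose_mul, hPs, Matrix.mul_assoc]
  have hQQ : Q * Q = Q := by
    calc Q * Q = Fᵀ * (P * (F * Fᵀ) * P) * F := by simp only [hQ, Matrix.mul_assoc]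
      _ = Q := by rw [hF, hP.2.1]
  have hR : (1 - Q) * (1 - Q)ᵀ = 1 - Q := by
    rw [transpose_sub, transpose_one, hQs, Matrix.mul_sub, Matrix.sub_mul, Matrix.sub_mul, hQQ]
    simp
  have hpos := (hG.conjTranspose_mul_mul_same (Δ * (1 - Q))).trace_nonneg
  have he : ((Δ * (1 - Q))ᴴ * G * (Δ * (1 - Q))).trace
      = (G * Δ * Δᵀ).trace - (G * Δ * Q * Δᵀ).trace := by
    rw [conjTranspose_eq_transpose_of_trivial, Matrix.mul_assoc, trace_mul_comm, transpose_mul]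
    calc _ = (G * Δ * ((1 - Q) * (1 - Q)ᵀ) * Δᵀ).trace := by simp only [Matrix.mul_assoc]
      _ = _ := by rw [hR, Matrix.mul_sub, Matrix.sub_mul, trace_sub, Matrix.mul_one]
  rw [he] at hpos
  rw [ht] at hmain
  linarith
end

section
/- If a matrix F ∈ R^{d×d} satisfies the second-order necessary conditions (2NC) for problem (DSS), then the matrix X = FF^T satisfies the second-order necessary conditions (2NC) for problem (BC). -/
open Matrix

theorem mp_symm {d : ℕ} {X P : Matrix (Fin d) (Fin d) ℝ} (hX : Xᵀ = X)
    (hP : IsMoorePenrose X P) : Pᵀ = P ∧ X * P = P * X := by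
  obtain ⟨h1, h2, h3, h4⟩ := hP
  have e1 : Pᵀ * X = X * P := by rw [← h3, transpose_mul, hX]
  have e2 : X * Pᵀ = P * X := by rw [← h4, transpose_mul, hX]
  have h1' : X * Pᵀ * X = X := by
    have := congrArg transpose h1
    simpa [transpose_mul, hX, Matrix.mul_assoc] using this
  have h2' : Pᵀ * X * Pᵀ = Pᵀ := by
    have := congrArg transpose h2
    simpa [transpose_mul, hX, Matrix.mul_assoc] using this
  have a : (P * X) * (X * P) = X * P := by
    rw [← e2, ← Matrix.mul_assoc, h1']
  have b : (X * P) * (P * X) = X * P := by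
    have := congrArg transpose a
    rwa [transpose_mul, h3, h4] at this
  have c : (X * P) * (P * X) = P * X := by
    rw [← e2, ← Matrix.mul_assoc, h1]
  have e : X * P = P * X := b.symm.trans c
  refine ⟨?_, e⟩
  calc Pᵀ = Pᵀ * X * Pᵀ := h2'.symm
    _ = P * X * Pᵀ := by rw [e1, e]
    _ = P * (X * Pᵀ) := by rw [Matrix.mul_assoc]
    _ = P * X * P := by rw [e2, Matrix.mul_assoc, e]
    _ = P := h2

theorem trace_idem {d : ℕ} (A : Matrix (Fin d) (Fin d) ℝ) (hA : A * A = A) :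
    A.trace = A.rank := by
  have hid : IsIdempotentElem (Matrix.toLin' A) := by
    unfold IsIdempotentElem
    rw [Module.End.mul_eq_comp, ← Matrix.toLin'_mul, hA]
  have h1 := (LinearMap.IsIdempotentElem.isProj_range _ hid).trace
  rw [Matrix.trace_toLin'_eq] at h1
  rw [h1]
  rfl

theorem null_proj {d : ℕ} {X P : Matrix (Fin d) (Fin d) ℝ} (hX : Xᵀ = X)
    (hP : IsMoorePenrose X P) (V : Matrix (Fin d) (Fin (d - X.rank)) ℝ)
    (hV : Vᵀ * V = 1) (hXV : X * V = 0) : 1 - X * P = V * Vᵀ := by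
  obtain ⟨hs, hc⟩ := mp_symm hX hP
  obtain ⟨h1, h2, h3, h4⟩ := hP
  have hid : (X * P) * (X * P) = X * P := by rw [← Matrix.mul_assoc, h1]
  have hrk : (X * P).rank = X.rank := by
    apply le_antisymm (Matrix.rank_mul_le_left _ _)
    conv_lhs => rw [← h1]
    exact Matrix.rank_mul_le_left _ _
  have hPV : (X * P) * V = 0 := by rw [hc, Matrix.mul_assoc, hXV, Matrix.mul_zero]
  have hVP : Vᵀ * (X * P) = 0 := by
    have := congrArg transpose hPV
    rwa [transpose_mul, h3, transpose_zero] at this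
  have hVV : (V * Vᵀ) * (V * Vᵀ) = V * Vᵀ := by
    rw [Matrix.mul_assoc, ← Matrix.mul_assoc Vᵀ, hV, Matrix.one_mul]
  have hPVV : (X * P) * (V * Vᵀ) = 0 := by rw [← Matrix.mul_assoc, hPV, Matrix.zero_mul]
  have hVVP : (V * Vᵀ) * (X * P) = 0 := by rw [Matrix.mul_assoc, hVP, Matrix.mul_zero]
  have htr : (1 - X * P - V * Vᵀ).trace = 0 := by
    have hle : X.rank ≤ d := by simpa using X.rank_le_card_width
    rw [trace_sub, trace_sub, trace_idem _ hid, hrk, trace_mul_comm V, hV]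
    simp [Nat.cast_sub hle]
  have hAt : (1 - X * P - V * Vᵀ)ᵀ = 1 - X * P - V * Vᵀ := by
    rw [transpose_sub, transpose_sub, h3, transpose_mul, transpose_transpose, transpose_one]
  have hAA : (1 - X * P - V * Vᵀ) * (1 - X * P - V * Vᵀ) = 1 - X * P - V * Vᵀ := by
    generalize X * P = p at *
    generalize V * Vᵀ = q at *
    simp only [sub_mul, mul_sub, hid, hVV, hPVV, hVVP, mul_one, one_mul]
    abel
  have h0 : 1 - X * P - V * Vᵀ = 0 := by
    rw [← Matrix.trace_conjTranspose_mul_self_eq_zero_iff, conjTranspose_eq_transpose_of_trivial,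
      hAt, hAA, htr]
  exact sub_eq_zero.1 h0

/-- If `F ∈ ℝ^{d×d}` satisfies 2NC for (DSS), then `X = FFᵀ` satisfies 2NC for (BC). -/
theorem statement1 {d : ℕ} (h : Matrix (Fin d) (Fin d) ℝ → ℝ)
    (gh : Matrix (Fin d) (Fin d) ℝ → Matrix (Fin d) (Fin d) ℝ)
    (hsm : ContDiff ℝ 2 (fun A : Fin d → Fin d → ℝ => h (Matrix.of A)))
    (hgrad : IsGradient h gh)
    (F : Matrix (Fin d) (Fin d) ℝ)
    (hF : DSS2NC h gh F) :
    BC2NC h gh (F * Fᵀ) := by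
  obtain ⟨hG, h2⟩ := hF
  have hXs : (F * Fᵀ)ᵀ = F * Fᵀ := by simp
  have hGs : (gh (F * Fᵀ))ᵀ = gh (F * Fᵀ) := hgrad.1 _ hXs
  have hGX : gh (F * Fᵀ) * (F * Fᵀ) = 0 := by rw [← Matrix.mul_assoc, hG, Matrix.zero_mul]
  refine ⟨⟨?_, ?_, hGX⟩, ?_⟩
  · simpa using Matrix.posSemidef_self_mul_conjTranspose F
  · by_cases hdet : F.det = 0
    · obtain ⟨w, hw, hFw⟩ := Matrix.exists_mulVec_eq_zero_iff.2 hdet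
      refine Matrix.PosSemidef.of_dotProduct_mulVec_nonneg hGs fun u => ?_
      have h3 := h2 (vecMulVec u w)
      have e : F * (vecMulVec u w)ᵀ = 0 := by
        rw [transpose_vecMulVec, mul_vecMulVec, hFw, zero_vecMulVec]
      have e' : vecMulVec u w * Fᵀ = 0 := by
        have := congrArg transpose e
        simpa [transpose_mul] using this
      have e0 : D2 h (F * Fᵀ) 0 = 0 := by
        simp [D2, iteratedDeriv_succ]
      have hww : 0 < w ⬝ᵥ w := by
        have := Matrix.dotProduct_star_self_pos_iff.2 hw
        simpa using this
      rw [e, e', add_zero, e0, zero_add, transpose_vecMulVec, Matrix.mul_assoc,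
        vecMulVec_mul_vecMulVec, mul_vecMulVec, trace_vecMulVec, dotProduct_smul] at h3
      have h4 : 0 ≤ (w ⬝ᵥ w) * ((gh (F * Fᵀ)).mulVec u ⬝ᵥ u) := by
        simp only [smul_eq_mul] at h3
        linarith
      have := nonneg_of_mul_nonneg_right h4 hww
      rwa [dotProduct_comm] at this
    · have hu : IsUnit F.det := isUnit_iff_ne_zero.2 hdet
      have : gh (F * Fᵀ) = 0 := by
        have := congrArg (· * F⁻¹) hG
        simpa [Matrix.mul_assoc, Matrix.mul_nonsing_inv F hu] using this
      rw [this]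
      exact Matrix.PosSemidef.zero
  · intro V hV hXV P hP W hW hVW
    have hQ := null_proj hXs hP V hV hXV
    obtain ⟨hs, hc⟩ := mp_symm hXs hP
    obtain ⟨m1, m2, m3, m4⟩ := hP
    have hQW : (1 - F * Fᵀ * P) * W * (1 - F * Fᵀ * P) = 0 := by
      rw [hQ]
      calc V * Vᵀ * W * (V * Vᵀ) = V * (Vᵀ * W * V) * Vᵀ := by simp only [Matrix.mul_assoc]
        _ = 0 := by rw [hVW]; simp
    have hWs : Wᵀ = W := hW
    have h3 := h2 ((W - (1 / 2 : ℝ) • (F * Fᵀ * P * W)) * P * F)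
    have hT : ((W - (1 / 2 : ℝ) • (F * Fᵀ * P * W)) * P * F)ᵀ
        = Fᵀ * P * (W - (1 / 2 : ℝ) • (W * (F * Fᵀ * P))) := by
      rw [transpose_mul, transpose_mul, transpose_sub, transpose_smul, transpose_mul, m3, hs, hWs,
        ← Matrix.mul_assoc Fᵀ P]
    rw [hT] at h3
    have hA : F * (Fᵀ * P * (W - (1 / 2 : ℝ) • (W * (F * Fᵀ * P)))) +
        (W - (1 / 2 : ℝ) • (F * Fᵀ * P * W)) * P * F * Fᵀ = W := by
      have k1 : F * (Fᵀ * P * (W - (1 / 2 : ℝ) • (W * (F * Fᵀ * P))))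
          = (F * Fᵀ * P) * (W - (1 / 2 : ℝ) • (W * (F * Fᵀ * P))) := by
        simp only [Matrix.mul_assoc]
      have k2 : (W - (1 / 2 : ℝ) • (F * Fᵀ * P * W)) * P * F * Fᵀ
          = (W - (1 / 2 : ℝ) • (F * Fᵀ * P * W)) * (F * Fᵀ * P) := by
        rw [hc]; simp only [Matrix.mul_assoc]
      rw [k1, k2]
      generalize F * Fᵀ * P = p at *
      have k3 : W - p * W - W * p + p * W * p = 0 := by
        rw [← hQW]; noncomm_ring
      have k4 : W = p * W + W * p - p * W * p := by
        rw [← sub_eq_zero, ← k3]; abel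
      conv_rhs => rw [k4]
      simp only [Matrix.mul_sub, Matrix.sub_mul, Matrix.mul_smul, Matrix.smul_mul, Matrix.mul_assoc]
      module
    have hB : (gh (F * Fᵀ) * ((W - (1 / 2 : ℝ) • (F * Fᵀ * P * W)) * P * F) *
        (Fᵀ * P * (W - (1 / 2 : ℝ) • (W * (F * Fᵀ * P))))).trace
        = (W * P * W * gh (F * Fᵀ)).trace := by
      have hGp : gh (F * Fᵀ) * (F * Fᵀ * P) = 0 := by
        rw [← Matrix.mul_assoc, hGX, Matrix.zero_mul]
      have hpG : (F * Fᵀ * P) * gh (F * Fᵀ) = 0 := by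
        have := congrArg transpose hGp
        rwa [transpose_mul, m3, hGs, transpose_zero] at this
      have k1 : gh (F * Fᵀ) * ((W - (1 / 2 : ℝ) • (F * Fᵀ * P * W)) * P * F)
          = gh (F * Fᵀ) * W * P * F := by
        rw [← Matrix.mul_assoc, ← Matrix.mul_assoc, Matrix.mul_sub, Matrix.mul_smul,
          ← Matrix.mul_assoc _ (F * Fᵀ * P) W, hGp, Matrix.zero_mul, smul_zero, sub_zero]
      have k2 : (W - (1 / 2 : ℝ) • (W * (F * Fᵀ * P))) * gh (F * Fᵀ) = W * gh (F * Fᵀ) := by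
        rw [Matrix.sub_mul, Matrix.smul_mul, Matrix.mul_assoc W, hpG, Matrix.mul_zero, smul_zero,
          sub_zero]
      have k3 : W * P * F * (Fᵀ * P * (W * gh (F * Fᵀ)))
          = W * (P * (F * Fᵀ) * P) * W * gh (F * Fᵀ) := by
        simp only [Matrix.mul_assoc]
      rw [k1, Matrix.mul_assoc (gh (F * Fᵀ)), Matrix.mul_assoc (gh (F * Fᵀ)),
        Matrix.mul_assoc (gh (F * Fᵀ)), trace_mul_comm, Matrix.mul_assoc, Matrix.mul_assoc (Fᵀ * P),
        k2, k3, m2]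
    rw [hA, hB] at h3
    exact h3
end

section
/- Suppose a rank-r matrix X ∈ S^d has a factorization X = FF^T for some F ∈ R^{d×k} with k ≥ r, and S ∈ S^d satisfies SF = 0 and S ⪰ 0. Then for any Δ ∈ R^{d×d}, letting W = FΔ^T + ΔF^T, one has tr(S(ΔΔ^T − W X† W)) ≥ 0. -/
open Matrix

/-- Suppose a rank-`r` matrix `X ∈ S^d` is factored as `X = FFᵀ` with `F ∈ ℝ^{d×k}`, `k ≥ r`,
and `S ∈ S^d` satisfies `SF = 0` and `S ⪰ 0`. Then for any `Δ`, with `W = FΔᵀ + ΔFᵀ`,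
one has `tr(S(ΔΔᵀ − W X† W)) ≥ 0`. -/
theorem statement2 {d k : ℕ}
    (X : Matrix (Fin d) (Fin d) ℝ) (hXsymm : X.IsSymm) (hk : X.rank ≤ k)
    (F : Matrix (Fin d) (Fin k) ℝ) (hFX : F * Fᵀ = X)
    (S : Matrix (Fin d) (Fin d) ℝ) (hSsymm : S.IsSymm)
    (hSF : S * F = 0) (hS : S.PosSemidef)
    (P : Matrix (Fin d) (Fin d) ℝ) (hP : IsMoorePenrose X P)
    (Δ : Matrix (Fin d) (Fin k) ℝ) :
    0 ≤ (S * (Δ * Δᵀ - (F * Δᵀ + Δ * Fᵀ) * P * (F * Δᵀ + Δ * Fᵀ))).trace := by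
  obtain ⟨h1, h2, h3, h4⟩ := hP
  have hX : Xᵀ = X := hXsymm
  have hSt : Sᵀ = S := hSsymm
  rw [transpose_mul, hX] at h3 h4
  -- h3 : Pᵀ * X = X * P, h4 : X * Pᵀ = P * X
  have h5 : X * Pᵀ * X = X := by
    have := congrArg transpose h1
    simpa [transpose_mul, hX, Matrix.mul_assoc] using this
  have h6 : Pᵀ * X * Pᵀ = Pᵀ := by
    have := congrArg transpose h2
    simpa [transpose_mul, hX, Matrix.mul_assoc] using this
  have h7 : X * P = (X * Pᵀ) * (X * P) := by
    rw [← Matrix.mul_assoc, h5]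
  have h8 : X * P = X * Pᵀ := by
    have h := congrArg transpose h7
    rw [transpose_mul, transpose_mul, transpose_mul, transpose_mul, transpose_transpose, hX,
      h3, ← h4, ← Matrix.mul_assoc, h1] at h
    exact h
  have hPs : Pᵀ = P := by
    calc Pᵀ = (Pᵀ * X) * Pᵀ := h6.symm
      _ = (P * X) * Pᵀ := by rw [h3, h8, h4]
      _ = P * X * P := by rw [Matrix.mul_assoc, ← h8, Matrix.mul_assoc]
      _ = P := h2
  set R : Matrix (Fin k) (Fin k) ℝ := 1 - Fᵀ * P * F with hR
  have hRt : Rᵀ = R := by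
    simp [hR, transpose_mul, hPs, Matrix.mul_assoc]
  have hQ : (Fᵀ * P * F) * (Fᵀ * P * F) = Fᵀ * P * F := by
    calc (Fᵀ * P * F) * (Fᵀ * P * F) = Fᵀ * (P * (F * Fᵀ) * P) * F := by
          simp only [Matrix.mul_assoc]
      _ = Fᵀ * P * F := by rw [hFX, h2]
  have hRR : R * R = R := by
    rw [hR, Matrix.sub_mul, Matrix.mul_sub, Matrix.mul_sub, hQ]
    simp
  have hFS : Fᵀ * S = 0 := by
    have := congrArg transpose hSF
    simpa [transpose_mul, hSt] using this
  have hz : (S * (Δ * Fᵀ * P * (Δ * Fᵀ))).trace = 0 := by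
    have : S * (Δ * Fᵀ * P * (Δ * Fᵀ)) = (S * Δ * Fᵀ * P * Δ) * Fᵀ := by
      simp only [Matrix.mul_assoc]
    rw [this, trace_mul_comm]
    have : Fᵀ * (S * Δ * Fᵀ * P * Δ) = (Fᵀ * S) * (Δ * Fᵀ * P * Δ) := by
      simp only [Matrix.mul_assoc]
    rw [this, hFS]
    simp
  have e1 : S * (Δ * Δᵀ - (F * Δᵀ + Δ * Fᵀ) * P * (F * Δᵀ + Δ * Fᵀ))
      = S * (Δ * R * Δᵀ) - S * (Δ * Fᵀ * P * (Δ * Fᵀ))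
        - (S * F) * (Δᵀ * P * (F * Δᵀ + Δ * Fᵀ)) := by
    simp only [hR, Matrix.mul_sub, Matrix.sub_mul, Matrix.mul_add, Matrix.add_mul,
      Matrix.mul_assoc, Matrix.mul_one, Matrix.one_mul]
    abel
  rw [e1, hSF, Matrix.zero_mul, sub_zero, trace_sub, hz, sub_zero]
  have e2 : S * (Δ * R * Δᵀ) = (S * (Δ * R)) * (Δ * R)ᵀ := by
    rw [transpose_mul, hRt]
    nth_rewrite 1 [← hRR]
    simp only [Matrix.mul_assoc]
  rw [e2, trace_mul_comm]
  have := (hS.conjTranspose_mul_mul_same (Δ * R)).trace_nonneg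
  rw [conjTranspose_eq_transpose_of_trivial, Matrix.mul_assoc] at this
  exact this
end

section
/- Suppose a matrix X ∈ S^d with rank r ≤ d has a factorization X = FF^T for some F ∈ R^{d×k} with k ≥ r, and S ∈ S^d satisfies SX = 0. Then for any W ∈ S^d such that V_X^T W V_X = 0, there exists Δ ∈ R^{d×k} such that (i) W = ΔF^T + FΔ^T, and (ii) tr(S(W X† W − ΔΔ^T)) = 0. -/
open Matrix

theorem aux_decomp {d : ℕ} (X : Matrix (Fin d) (Fin d) ℝ) (hX : X.IsSymm) :
    ∃ (U : Matrix (Fin d) (Fin d) ℝ) (l : Fin d → ℝ), Uᵀ * U = 1 ∧ U * Uᵀ = 1 ∧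
      X = U * diagonal l * Uᵀ ∧ X.rank = Fintype.card {i // l i ≠ 0} := by
  have hH : X.IsHermitian := by
    rw [Matrix.IsHermitian, conjTranspose_eq_transpose_of_trivial]; exact hX
  have h1 := (Matrix.mem_unitaryGroup_iff').1 hH.eigenvectorUnitary.2
  have h2 := (Matrix.mem_unitaryGroup_iff).1 hH.eigenvectorUnitary.2
  have h3 := hH.spectral_theorem
  rw [Unitary.conjStarAlgAut_apply] at h3
  simp only [star_eq_conjTranspose, conjTranspose_eq_transpose_of_trivial] at h1 h2 h3
  refine ⟨hH.eigenvectorUnitary, hH.eigenvalues, h1, h2, ?_, hH.rank_eq_card_non_zero_eigs⟩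
  simpa [star_eq_conjTranspose, conjTranspose_eq_transpose_of_trivial, Function.comp_def] using h3

theorem mp_unique {d : ℕ} {X P R : Matrix (Fin d) (Fin d) ℝ}
    (hP : IsMoorePenrose X P) (hR : IsMoorePenrose X R) : P = R := by
  obtain ⟨p1, p2, p3, p4⟩ := hP
  obtain ⟨r1, r2, r3, r4⟩ := hR
  have e1 : X * P = X * R := by
    calc X * P = (X * P)ᵀ := p3.symm
      _ = ((X * R) * (X * P))ᵀ := by rw [← Matrix.mul_assoc, r1]
      _ = (X * P) * (X * R) := by rw [transpose_mul, p3, r3]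
      _ = X * R := by rw [← Matrix.mul_assoc, p1]
  have e2 : P * X = R * X := by
    calc P * X = (P * X)ᵀ := p4.symm
      _ = ((P * X) * (R * X))ᵀ := by rw [Matrix.mul_assoc, ← Matrix.mul_assoc X, r1]
      _ = (R * X) * (P * X) := by rw [transpose_mul, p4, r4]
      _ = R * X := by rw [Matrix.mul_assoc, ← Matrix.mul_assoc X, p1]
  calc P = P * X * P := p2.symm
    _ = R * (X * P) := by rw [e2, Matrix.mul_assoc]
    _ = R := by rw [e1, ← Matrix.mul_assoc, r2]

theorem aux_main {d : ℕ} (X : Matrix (Fin d) (Fin d) ℝ) (hX : X.IsSymm) :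
    ∃ (P : Matrix (Fin d) (Fin d) ℝ) (V : Matrix (Fin d) (Fin (d - X.rank)) ℝ),
      IsMoorePenrose X P ∧ Pᵀ = P ∧ X * P = P * X ∧ Vᵀ * V = 1 ∧ X * V = 0 ∧
      V * Vᵀ = 1 - X * P := by
  obtain ⟨U, l, h1, h2, h3, h4⟩ := aux_decomp X hX
  have key : ∀ a b : Fin d → ℝ, (U * diagonal a * Uᵀ) * (U * diagonal b * Uᵀ) =
      U * diagonal (fun i => a i * b i) * Uᵀ := by
    intro a b
    calc _ = U * diagonal a * (Uᵀ * U) * diagonal b * Uᵀ := by simp only [Matrix.mul_assoc]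
      _ = _ := by rw [h1, Matrix.mul_one, Matrix.mul_assoc U, diagonal_mul_diagonal]
  have keyT : ∀ a : Fin d → ℝ, (U * diagonal a * Uᵀ)ᵀ = U * diagonal a * Uᵀ := by
    intro a
    simp [transpose_mul, Matrix.mul_assoc]
  have hc : Fintype.card {i // l i = 0} = Fintype.card (Fin (d - X.rank)) := by
    have := Fintype.card_subtype_compl (fun i => l i = 0)
    have h5 := Fintype.card_subtype_le (fun i => l i = 0)
    simp only [Fintype.card_fin] at this h5 ⊢
    rw [h4]
    simp only [ne_eq]
    omega
  let e : {i // l i = 0} ≃ Fin (d - X.rank) := Fintype.equivOfCardEq hc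
  have hVV : (U.submatrix id (fun j => (e.symm j : Fin d))) *
      (U.submatrix id (fun j => (e.symm j : Fin d)))ᵀ =
      U * diagonal (fun i => if l i = 0 then (1:ℝ) else 0) * Uᵀ := by
    ext a b
    rw [Matrix.mul_apply, Matrix.mul_apply]
    simp only [transpose_apply, submatrix_apply, id, mul_diagonal]
    rw [Equiv.sum_comp e.symm (fun i : {i // l i = 0} => U a i.1 * U b i.1)]
    simp only [mul_ite, mul_one, mul_zero, ite_mul, zero_mul]
    rw [← Finset.sum_filter]
    symm
    apply Finset.sum_subtype
    simp
  have hXP : X * (U * diagonal (fun i => (l i)⁻¹) * Uᵀ) =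
      U * diagonal (fun i => l i * (l i)⁻¹) * Uᵀ := by
    conv_lhs => rw [h3]
    rw [key]
  have hPX : (U * diagonal (fun i => (l i)⁻¹) * Uᵀ) * X =
      U * diagonal (fun i => l i * (l i)⁻¹) * Uᵀ := by
    conv_lhs => rw [h3]
    rw [key]
    simp only [mul_comm]
  refine ⟨U * diagonal (fun i => (l i)⁻¹) * Uᵀ,
    U.submatrix id (fun j => (e.symm j : Fin d)), ⟨?_, ?_, ?_, ?_⟩, keyT _, ?_, ?_, ?_, ?_⟩
  · rw [hXP]
    conv_lhs => rw [h3]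
    conv_rhs => rw [h3]
    rw [key]
    simp
  · rw [hPX, key]
    congr 3
    ext i
    by_cases h : l i = 0 <;> simp [h]
  · rw [hXP, keyT]
  · rw [hPX, keyT]
  · rw [hXP, hPX]
  · ext a b
    have := congrFun (congrFun h1 (e.symm a)) (e.symm b)
    simp only [Matrix.mul_apply, transpose_apply, submatrix_apply, id] at this ⊢
    rw [this]
    simp [Matrix.one_apply, Subtype.ext_iff.symm]
  · have hXU : X * U = U * diagonal l := by
      rw [h3, Matrix.mul_assoc, h1, Matrix.mul_one]
    ext a b
    have := congrFun (congrFun hXU a) (e.symm b)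
    rw [mul_diagonal, (e.symm b).2, mul_zero] at this
    simpa [Matrix.mul_apply] using this
  · rw [hVV, hXP, eq_sub_iff_add_eq, ← Matrix.add_mul, ← Matrix.mul_add, diagonal_add]
    rw [show (fun i => (if l i = 0 then (1:ℝ) else 0) + l i * (l i)⁻¹) = fun _ => 1 from ?_]
    · simp [h2]
    · ext i
      by_cases h : l i = 0 <;> simp [h]

/-- Suppose `X ∈ S^d` of rank `r ≤ d` is factored as `X = FFᵀ` with `F ∈ ℝ^{d×k}`, `k ≥ r`,
and `S ∈ S^d` satisfies `SX = 0`. Then for any symmetric `W` with `V_Xᵀ W V_X = 0`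
(where `V_X` is any matrix with orthonormal columns spanning the null space of `X`),
there is `Δ ∈ ℝ^{d×k}` with (i) `W = ΔFᵀ + FΔᵀ` and (ii) `tr(S(W X† W − ΔΔᵀ)) = 0`. -/
theorem statement3 {d k : ℕ}
    (X : Matrix (Fin d) (Fin d) ℝ) (hXsymm : X.IsSymm) (hk : X.rank ≤ k)
    (F : Matrix (Fin d) (Fin k) ℝ) (hFX : F * Fᵀ = X)
    (S : Matrix (Fin d) (Fin d) ℝ) (hSsymm : S.IsSymm) (hSX : S * X = 0)
    (W : Matrix (Fin d) (Fin d) ℝ) (hWsymm : W.IsSymm)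
    (hW : ∀ V : Matrix (Fin d) (Fin (d - X.rank)) ℝ,
      Vᵀ * V = 1 → X * V = 0 → Vᵀ * W * V = 0) :
    ∃ Δ : Matrix (Fin d) (Fin k) ℝ,
      W = Δ * Fᵀ + F * Δᵀ ∧
      ∀ P : Matrix (Fin d) (Fin d) ℝ, IsMoorePenrose X P →
        (S * (W * P * W - Δ * Δᵀ)).trace = 0 := by
  obtain ⟨P, V, hP, hPT, hc, hV1, hV2, hV3⟩ := aux_main X hXsymm
  have hWV := hW V hV1 hV2
  have hN : (1 - X * P) * W * (1 - X * P) = 0 := by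
    rw [← hV3]
    calc _ = V * (Vᵀ * W * V) * Vᵀ := by simp only [Matrix.mul_assoc]
      _ = 0 := by rw [hWV]; simp
  have hQT := hP.2.2.1
  have hSQ : S * (X * P) = 0 := by rw [← Matrix.mul_assoc, hSX, Matrix.zero_mul]
  have hQS : (X * P) * S = 0 := by
    have := congrArg transpose hSQ
    rwa [transpose_mul, hQT, hSsymm.eq, transpose_zero] at this
  have hPQ : P * (X * P) = P := by rw [← Matrix.mul_assoc, hP.2.1]
  have hT : ((W - (1/2 : ℝ) • (X * P * W)) * P * F)ᵀ =
      Fᵀ * (P * (W - (1/2 : ℝ) • (W * (X * P)))) := by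
    rw [transpose_mul, transpose_mul, transpose_sub, transpose_smul, transpose_mul, hQT,
      hWsymm.eq, hPT]
  refine ⟨(W - (1/2 : ℝ) • (X * P * W)) * P * F, ?_, ?_⟩
  · rw [hT, ← Matrix.mul_assoc F, hFX, Matrix.mul_assoc _ F, hFX, Matrix.mul_assoc _ P, ← hc,
      ← Matrix.mul_assoc X]
    generalize X * P = Q at *
    simp only [Matrix.sub_mul, Matrix.mul_sub, Matrix.one_mul, Matrix.mul_one, Matrix.smul_mul,
      Matrix.mul_smul, Matrix.mul_assoc] at hN ⊢
    rw [sub_eq_zero] at hN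
    have : W = W * Q + (Q * W - Q * (W * Q)) := by
      rw [add_sub_left_comm, ← hN]; abel
    nth_rewrite 1 [this]
    module
  · intro R hR
    rw [mp_unique hR hP, hT]
    have e1 : S * ((W - (1/2 : ℝ) • (X * P * W)) * P * F *
        (Fᵀ * (P * (W - (1/2 : ℝ) • (W * (X * P)))))) =
        S * W * P * W - (1/2 : ℝ) • (S * W * P * W * (X * P)) := by
      calc _ = (S * (W - (1/2 : ℝ) • (X * P * W))) * (P * (F * Fᵀ) * P) *
            (W - (1/2 : ℝ) • (W * (X * P))) := by simp only [Matrix.mul_assoc]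
        _ = (S * W) * P * (W - (1/2 : ℝ) • (W * (X * P))) := by
          rw [hFX, hP.2.1, Matrix.mul_sub S, Matrix.mul_smul, ← Matrix.mul_assoc S (X * P), hSQ]
          simp
        _ = _ := by rw [Matrix.mul_sub, Matrix.mul_smul]; simp only [Matrix.mul_assoc]
    have e2 : (S * W * P * W * (X * P)).trace = 0 := by
      rw [trace_mul_comm]
      simp only [Matrix.mul_assoc S]
      rw [← Matrix.mul_assoc _ S, hQS]
      simp
    rw [Matrix.mul_sub, e1, trace_sub, trace_sub, trace_smul, e2]
    simp [Matrix.mul_assoc]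
end

section
/- Suppose a matrix X ∈ S^d with rank r has a factorization X = F·F with F ∈ S^d symmetric, F satisfies the eigenvalue condition (EC), and S ∈ S^d satisfies SX = 0. Then for any W ∈ S^d such that V_X^T W V_X = 0, there exists a symmetric Δ ∈ S^d such that (i) W = ΔF + FΔ, and (ii) tr(S(W X† W − Δ²)) = 0. -/
open Matrix

/-- `a` is an eigenvalue of `F`. -/
def IsEigOf {d : ℕ} (F : Matrix (Fin d) (Fin d) ℝ) (a : ℝ) : Prop :=
  ∃ v : Fin d → ℝ, v ≠ 0 ∧ F.mulVec v = a • v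

/-- The eigenvalue condition (EC): no two nonzero eigenvalues of `F` sum to `0`. -/
def EigCond {d : ℕ} (F : Matrix (Fin d) (Fin d) ℝ) : Prop :=
  ∀ a b : ℝ, IsEigOf F a → IsEigOf F b → a ≠ 0 → b ≠ 0 → a + b ≠ 0

/-- Cancellation: `M F F = 0` implies `M F = 0` for symmetric `F`. -/
lemma mul_sq_cancel {d : ℕ} (F M : Matrix (Fin d) (Fin d) ℝ) (hF : F.IsSymm)
    (h : M * (F * F) = 0) : M * F = 0 := by
  have h2 : (M * F) * (M * F)ᴴ = 0 := by
    rw [conjTranspose_eq_transpose_of_trivial, transpose_mul, hF.eq, ← Matrix.mul_assoc,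
      Matrix.mul_assoc M, h, Matrix.zero_mul]
  exact self_mul_conjTranspose_eq_zero.1 h2

/-- The real spectral theorem in orthogonal-matrix form. -/
lemma exists_spectral_s4 {d : ℕ} (F : Matrix (Fin d) (Fin d) ℝ) (hF : F.IsSymm) :
    ∃ (U : Matrix (Fin d) (Fin d) ℝ) (l : Fin d → ℝ), Uᵀ * U = 1 ∧ U * Uᵀ = 1 ∧
      F = U * diagonal l * Uᵀ ∧ F.rank = Fintype.card {i // l i ≠ 0} := by
  have hH : F.IsHermitian := by
    rw [IsHermitian, conjTranspose_eq_transpose_of_trivial, hF.eq]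
  have e : star (hH.eigenvectorUnitary : Matrix (Fin d) (Fin d) ℝ)
      = (hH.eigenvectorUnitary : Matrix (Fin d) (Fin d) ℝ)ᵀ := by
    rw [star_eq_conjTranspose, conjTranspose_eq_transpose_of_trivial]
  refine ⟨hH.eigenvectorUnitary, hH.eigenvalues, ?_, ?_, ?_, hH.rank_eq_card_non_zero_eigs⟩
  · rw [← e]; exact Unitary.coe_star_mul_self _
  · rw [← e]; exact Unitary.coe_mul_star_self _
  · rw [← e]
    simpa [Unitary.conjStarAlgAut_apply, Function.comp_def] using hH.spectral_theorem

lemma exists_delta {d : ℕ}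
    (F : Matrix (Fin d) (Fin d) ℝ) (hFsymm : F.IsSymm) (hEC : EigCond F)
    (W : Matrix (Fin d) (Fin d) ℝ) (hWsymm : W.IsSymm)
    (hW : ∀ V : Matrix (Fin d) (Fin (d - F.rank)) ℝ,
      Vᵀ * V = 1 → F * V = 0 → Vᵀ * W * V = 0) :
    ∃ Δ : Matrix (Fin d) (Fin d) ℝ, Δ.IsSymm ∧ W = Δ * F + F * Δ ∧
      ∀ A B : Matrix (Fin d) (Fin d) ℝ, F * A = 0 → B * F = 0 → B * Δ * A = 0 := by
  obtain ⟨U, l, hU, hU', hF, hr⟩ := exists_spectral_s4 F hFsymm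
  have hFU : F * U = U * diagonal l := by
    rw [hF, Matrix.mul_assoc, hU, Matrix.mul_one]
  have hUF : Uᵀ * F = diagonal l * Uᵀ := by
    rw [hF, ← Matrix.mul_assoc, ← Matrix.mul_assoc, hU, Matrix.one_mul]
  have hcol : ∀ i j, (F * U) i j = U i j * l j := by
    intro i j; rw [hFU, mul_diagonal]
  have heig : ∀ j, IsEigOf F (l j) := by
    intro j
    refine ⟨fun i => U i j, ?_, ?_⟩
    · intro h0
      have := congrFun (congrFun hU j) j
      simp only [mul_apply, transpose_apply, one_apply_eq] at this
      have h0' : ∀ i, U i j = 0 := fun i => congrFun h0 i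
      simp [h0'] at this
    · ext i
      have := hcol i j
      rw [mul_apply] at this
      simp only [mulVec, dotProduct, Pi.smul_apply, smul_eq_mul]
      rw [this, mul_comm]
  have hsum : ∀ i j, l i + l j = 0 → l i = 0 ∧ l j = 0 := by
    intro i j h
    by_cases h1 : l i = 0
    · exact ⟨h1, by linarith⟩
    · exact absurd h (hEC _ _ (heig i) (heig j) h1 (fun h2 => h1 (by linarith)))
  set W' := Uᵀ * W * U with hW'
  have hW's : ∀ i j, W' i j = W' j i := by
    have : W'ᵀ = W' := by
      simp [hW', transpose_mul, hWsymm.eq, Matrix.mul_assoc]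
    intro i j
    exact congrFun (congrFun this j) i
  have hWb : W = U * W' * Uᵀ := by
    calc W = (U * Uᵀ) * W * (U * Uᵀ) := by rw [hU', Matrix.one_mul, Matrix.mul_one]
      _ = _ := by simp only [hW', Matrix.mul_assoc]
  have hzero : ∀ i j, l i = 0 → l j = 0 → W' i j = 0 := by
    have hc : Fintype.card {i // l i = 0} = d - F.rank := by
      rw [hr]
      have := Fintype.card_subtype_compl (fun i => l i = 0)
      have h2 := Fintype.card_subtype_le (fun i => l i = 0)
      simp only [Fintype.card_fin] at this h2
      simp only [ne_eq]
      omega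
    let e := Fintype.equivFinOfCardEq hc
    let V : Matrix (Fin d) (Fin (d - F.rank)) ℝ := U.submatrix id (fun k => (e.symm k : Fin d))
    have h1 := hW V ?_ ?_
    · intro i j hi hj
      have := congrFun (congrFun h1 (e ⟨i, hi⟩)) (e ⟨j, hj⟩)
      have h3 : Vᵀ * W * V = W'.submatrix (fun k => (e.symm k : Fin d))
          (fun k => (e.symm k : Fin d)) := by
        ext a b
        simp [V, W', mul_apply]
      rw [h3] at this
      simpa using this
    · ext a b
      have := congrFun (congrFun hU (e.symm a)) (e.symm b)
      rw [mul_apply] at this ⊢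
      simp only [V, transpose_apply, submatrix_apply, id_eq] at this ⊢
      rw [this]
      simp [one_apply, Subtype.ext_iff.symm]
    · ext a b
      have := hcol a (e.symm b)
      rw [(e.symm b).2, mul_zero, mul_apply] at this
      rw [mul_apply]
      exact this
  let D : Matrix (Fin d) (Fin d) ℝ := of fun i j => W' i j / (l i + l j)
  have hD : W' = D * diagonal l + diagonal l * D := by
    ext i j
    rw [Matrix.add_apply, mul_diagonal, diagonal_mul]
    simp only [D, of_apply]
    by_cases h : l i + l j = 0
    · obtain ⟨h1, h2⟩ := hsum i j h
      rw [hzero i j h1 h2]; simp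
    · field_simp
      ring
  refine ⟨U * D * Uᵀ, ?_, ?_, ?_⟩
  · have : Dᵀ = D := by
      ext i j
      simp only [D, transpose_apply, of_apply]
      rw [hW's j i, add_comm]
    simp [IsSymm, transpose_mul, this, Matrix.mul_assoc]
  · calc W = U * (D * diagonal l + diagonal l * D) * Uᵀ := by rw [← hD]; exact hWb
      _ = U * D * (diagonal l * Uᵀ) + (U * diagonal l) * D * Uᵀ := by
        simp only [Matrix.mul_add, Matrix.add_mul, Matrix.mul_assoc]
      _ = _ := by rw [← hUF, ← hFU]; simp only [Matrix.mul_assoc]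
  · intro A B hA hB
    have hA' : ∀ i j, l i * (Uᵀ * A) i j = 0 := by
      intro i j
      rw [← diagonal_mul, ← Matrix.mul_assoc, ← hUF, Matrix.mul_assoc, hA]; simp
    have hB' : ∀ i j, (B * U) i j * l j = 0 := by
      intro i j
      rw [← mul_diagonal, Matrix.mul_assoc, ← hFU, ← Matrix.mul_assoc, hB]; simp
    have : B * (U * D * Uᵀ) * A = (B * U) * D * (Uᵀ * A) := by
      simp only [Matrix.mul_assoc]
    rw [this]
    ext a b
    rw [mul_apply]
    refine Finset.sum_eq_zero fun j _ => ?_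
    rw [mul_apply, Finset.sum_mul]
    refine Finset.sum_eq_zero fun i _ => ?_
    rcases mul_eq_zero.1 (hB' a i) with h | h
    · rw [h]; ring
    rcases mul_eq_zero.1 (hA' j b) with h2 | h2
    · simp [D, h, h2]
    · rw [h2]; ring

/-- Suppose `X ∈ S^d` is factored as `X = F·F` with `F ∈ S^d` symmetric satisfying the
eigenvalue condition (EC), and `S ∈ S^d` satisfies `SX = 0`. Then for any symmetric `W` with
`V_Xᵀ W V_X = 0`, there is a symmetric `Δ` with (i) `W = ΔF + FΔ` and
(ii) `tr(S(W X† W − Δ²)) = 0`. -/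
theorem statement4 {d : ℕ}
    (F : Matrix (Fin d) (Fin d) ℝ) (hFsymm : F.IsSymm) (hEC : EigCond F)
    (X : Matrix (Fin d) (Fin d) ℝ) (hFX : F * F = X)
    (S : Matrix (Fin d) (Fin d) ℝ) (hSsymm : S.IsSymm) (hSX : S * X = 0)
    (W : Matrix (Fin d) (Fin d) ℝ) (hWsymm : W.IsSymm)
    (hW : ∀ V : Matrix (Fin d) (Fin (d - X.rank)) ℝ,
      Vᵀ * V = 1 → X * V = 0 → Vᵀ * W * V = 0) :
    ∃ Δ : Matrix (Fin d) (Fin d) ℝ, Δ.IsSymm ∧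
      W = Δ * F + F * Δ ∧
      ∀ P : Matrix (Fin d) (Fin d) ℝ, IsMoorePenrose X P →
        (S * (W * P * W - Δ * Δ)).trace = 0 := by
  have hrank : X.rank = F.rank := by
    rw [← hFX]
    conv_lhs => rw [← hFsymm.eq]
    rw [hFsymm.eq]
    nth_rewrite 2 [← hFsymm.eq]
    exact rank_self_mul_transpose F
  rw [hrank] at hW
  obtain ⟨Δ, hΔ, hWΔ, hker⟩ := exists_delta F hFsymm hEC W hWsymm (by
    intro V hV hFV
    exact hW V hV (by rw [← hFX, Matrix.mul_assoc, hFV, Matrix.mul_zero]))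
  refine ⟨Δ, hΔ, hWΔ, ?_⟩
  rintro P ⟨hP, -⟩
  have hSF : S * F = 0 := mul_sq_cancel F S hFsymm (by rw [hFX, hSX])
  have hFS : F * S = 0 := by
    have := congrArg transpose hSF
    rwa [transpose_mul, hFsymm.eq, hSsymm.eq, transpose_zero] at this
  have hM : (1 - X * P) * F = 0 := mul_sq_cancel F _ hFsymm (by
    rw [hFX, Matrix.sub_mul, Matrix.one_mul, hP, sub_self])
  have hQ : F * (1 - F * P * F) = 0 := by
    rw [Matrix.mul_sub, Matrix.mul_one, ← hM, Matrix.sub_mul, Matrix.one_mul, ← hFX]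
    simp only [Matrix.mul_assoc]
  have hk := hker _ S hQ hSF
  have hSΔ : S * Δ = S * Δ * (F * P * F) := by
    rw [Matrix.mul_sub, Matrix.mul_one] at hk
    exact sub_eq_zero.1 hk
  have hSW : S * W = S * Δ * F := by
    rw [hWΔ, Matrix.mul_add, ← Matrix.mul_assoc, ← Matrix.mul_assoc, hSF, Matrix.zero_mul,
      add_zero]
  have h1 : S * (W * P * W) = S * Δ * Δ + S * Δ * F * P * Δ * F := by
    calc S * (W * P * W) = S * W * P * W := by simp only [Matrix.mul_assoc]
      _ = S * Δ * F * P * (F * Δ) + S * Δ * F * P * (Δ * F) := by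
        rw [hSW, ← Matrix.mul_add, add_comm (F * Δ), ← hWΔ]
      _ = S * Δ * (F * P * F) * Δ + S * Δ * F * P * Δ * F := by
        simp only [Matrix.mul_assoc]
      _ = _ := by rw [← hSΔ]
  have h2 : (S * Δ * F * P * Δ * F).trace = 0 := by
    rw [trace_mul_comm]
    have : F * (S * Δ * F * P * Δ) = (F * S) * (Δ * F * P * Δ) := by
      simp only [Matrix.mul_assoc]
    rw [this, hFS, Matrix.zero_mul, trace_zero]
  rw [Matrix.mul_sub, h1, ← Matrix.mul_assoc S Δ Δ, add_sub_cancel_left, h2]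
end

section
/- If a matrix X ∈ S^d satisfies the second-order necessary conditions (2NC) for problem (BC), then every symmetric matrix F ∈ S^d with F² = X satisfies the second-order necessary conditions (2NC) for problem (DSS-Sym). -/
open Matrix

/-- The symmetric product `A∘B = (ABᵀ + BAᵀ)/2`. -/
noncomputable def symProd {d : ℕ} (A B : Matrix (Fin d) (Fin d) ℝ) :
    Matrix (Fin d) (Fin d) ℝ :=
  (2⁻¹ : ℝ) • (A * Bᵀ + B * Aᵀ)

/-- Second-order necessary conditions (DSS-Sym-2NC) for `g(F) = h(F²)`, `F ∈ S^d`. -/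
noncomputable def DSSSym2NC {d : ℕ} (h : Matrix (Fin d) (Fin d) ℝ → ℝ)
    (gh : Matrix (Fin d) (Fin d) ℝ → Matrix (Fin d) (Fin d) ℝ)
    (F : Matrix (Fin d) (Fin d) ℝ) : Prop :=
  symProd (gh (F * F)) F = 0 ∧
    ∀ Δ : Matrix (Fin d) (Fin d) ℝ, Δ.IsSymm →
      0 ≤ D2 h (F * F) ((2 : ℝ) • symProd F Δ) + 2 * (gh (F * F) * (Δ * Δ)).trace

/-- A symmetric matrix has a symmetric commuting generalized inverse. -/
lemma exists_sym_ginv {d : ℕ} (F : Matrix (Fin d) (Fin d) ℝ) (hF : F.IsSymm) :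
    ∃ S : Matrix (Fin d) (Fin d) ℝ, Sᵀ = S ∧ F * S = S * F ∧ F * S * F = F ∧ S * F * S = S := by
  have hH : F.IsHermitian := by
    rw [Matrix.IsHermitian, conjTranspose_eq_transpose_of_trivial]
    exact hF
  obtain ⟨U, D, hU, hFD⟩ : ∃ (U : Matrix (Fin d) (Fin d) ℝ) (D : Fin d → ℝ),
      Uᵀ * U = 1 ∧ F = U * diagonal D * Uᵀ := by
    refine ⟨hH.eigenvectorUnitary, hH.eigenvalues, ?_, ?_⟩
    · have := (Matrix.mem_unitaryGroup_iff').1 hH.eigenvectorUnitary.2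
      simpa [star_eq_conjTranspose, conjTranspose_eq_transpose_of_trivial] using this
    · have := hH.spectral_theorem
      simpa [Unitary.conjStarAlgAut_apply, star_eq_conjTranspose,
        conjTranspose_eq_transpose_of_trivial, Function.comp_def] using this
  have key : ∀ A B : Matrix (Fin d) (Fin d) ℝ,
      (U * A * Uᵀ) * (U * B * Uᵀ) = U * (A * B) * Uᵀ := by
    intro A B
    calc _ = U * A * (Uᵀ * U) * B * Uᵀ := by simp only [Matrix.mul_assoc]
      _ = _ := by rw [hU]; simp only [Matrix.mul_assoc, Matrix.mul_one]
  refine ⟨U * diagonal (fun i => (D i)⁻¹) * Uᵀ, ?_, ?_, ?_, ?_⟩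
  · simp [Matrix.mul_assoc]
  · rw [hFD, key, key]; simp [mul_comm]
  · rw [hFD, key, key]; simp [diagonal_mul_diagonal]
  · rw [hFD, key, key]; have e : ∀ x : ℝ, x⁻¹ * x * x⁻¹ = x⁻¹ := fun x => by
      simpa using mul_inv_mul_cancel x⁻¹
    simp [diagonal_mul_diagonal, e]

/-- An orthonormal matrix spanning the null space. -/
lemma exists_null_basis {d : ℕ} (X : Matrix (Fin d) (Fin d) ℝ) :
    ∃ V : Matrix (Fin d) (Fin (d - X.rank)) ℝ, Vᵀ * V = 1 ∧ X * V = 0 := by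
  let K := LinearMap.ker (Matrix.toEuclideanLin X)
  have hK : Module.finrank ℝ K = d - X.rank := by
    have h1 := LinearMap.finrank_range_add_finrank_ker (Matrix.toEuclideanLin X)
    have h2 := Matrix.rank_eq_finrank_range_toLin X (EuclideanSpace.basisFun (Fin d) ℝ).toBasis
      (EuclideanSpace.basisFun (Fin d) ℝ).toBasis
    rw [← Matrix.toEuclideanLin_eq_toLin_orthonormal] at h2
    rw [← h2, finrank_euclideanSpace_fin] at h1
    change Module.finrank ℝ (LinearMap.ker (Matrix.toEuclideanLin X)) = _
    omega
  let b := (stdOrthonormalBasis ℝ K).reindex (finCongr hK)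
  refine ⟨Matrix.of fun i j => (b j : EuclideanSpace ℝ (Fin d)) i, ?_, ?_⟩
  · ext i j
    have := (orthonormal_iff_ite.1 b.orthonormal) j i
    rw [Submodule.coe_inner, PiLp.inner_apply] at this
    simp only [Matrix.mul_apply, Matrix.transpose_apply, Matrix.of_apply, Matrix.one_apply]
    simpa [eq_comm] using this
  · ext i j
    have h2 : Matrix.toEuclideanLin X (b j : EuclideanSpace ℝ (Fin d)) = 0 := (b j).2
    have := congrArg (fun v : EuclideanSpace ℝ (Fin d) => v i) h2
    rw [Matrix.toLpLin_apply] at this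
    exact this

lemma eq_zero_of_gram {m n : ℕ} (A : Matrix (Fin m) (Fin n) ℝ) (h : Aᵀ * A = 0) : A = 0 := by
  rw [← conjTranspose_eq_transpose_of_trivial] at h
  exact Matrix.conjTranspose_mul_self_eq_zero.1 h

/-- If `X ∈ S^d` satisfies 2NC for (BC), then every symmetric `F` with `F² = X`
satisfies 2NC for (DSS-Sym). -/
theorem statement5 {d : ℕ} (h : Matrix (Fin d) (Fin d) ℝ → ℝ)
    (gh : Matrix (Fin d) (Fin d) ℝ → Matrix (Fin d) (Fin d) ℝ)
    (hsm : ContDiff ℝ 2 (fun A : Fin d → Fin d → ℝ => h (Matrix.of A)))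
    (hgrad : IsGradient h gh)
    (X : Matrix (Fin d) (Fin d) ℝ) (hXsymm : X.IsSymm)
    (hX : BC2NC h gh X)
    (F : Matrix (Fin d) (Fin d) ℝ) (hFsymm : F.IsSymm) (hF : F * F = X) :
    DSSSym2NC h gh F := by
  obtain ⟨⟨-, hG, hGX⟩, h2⟩ := hX
  obtain ⟨V, hV, hXV⟩ := exists_null_basis X
  obtain ⟨S, hS, hFS, hFSF, hSFS⟩ := exists_sym_ginv F hFsymm
  have hFt : Fᵀ = F := hFsymm
  have hGt : (gh X)ᵀ = gh X := hgrad.1 X hXsymm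
  unfold DSSSym2NC
  rw [hF]
  generalize gh X = G at *
  have hFG : F * G = 0 := by
    apply eq_zero_of_gram
    rw [transpose_mul, hFt, hGt, Matrix.mul_assoc, ← Matrix.mul_assoc F, hF, ← Matrix.mul_assoc,
      hGX, Matrix.zero_mul]
  have hGF : G * F = 0 := by
    have := congrArg transpose hFG
    simpa [transpose_mul, hFt, hGt] using this
  have hFV : F * V = 0 := by
    apply eq_zero_of_gram
    rw [transpose_mul, hFt, Matrix.mul_assoc, ← Matrix.mul_assoc F, hF, hXV, Matrix.mul_zero]
  have hVF : Vᵀ * F = 0 := by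
    have := congrArg transpose hFV
    simpa [transpose_mul, hFt] using this
  refine ⟨by simp [symProd, hFt, hGt, hFG, hGF], ?_⟩
  intro Δ hΔ
  have hΔt : Δᵀ = Δ := hΔ
  have hW : (2 : ℝ) • symProd F Δ = F * Δ + Δ * F := by
    simp [symProd, hFt, hΔt, smul_smul]
  rw [hW]
  -- `Q = F * S` is the orthogonal projection on the range of `F`
  have hQQ : F * S * (F * S) = F * S := by rw [← Matrix.mul_assoc, hFSF]
  have hQt : (F * S)ᵀ = F * S := by rw [transpose_mul, hS, hFt, hFS]
  have hXP : X * (S * S) = F * S := by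
    calc X * (S * S) = F * (F * S) * S := by rw [← hF]; simp only [Matrix.mul_assoc]
      _ = F * S * (F * S) := by
          conv_lhs => rw [hFS]
          simp only [Matrix.mul_assoc]
      _ = F * S := hQQ
  have hPX : (S * S) * X = F * S := by
    have := congrArg transpose hXP
    have hXt : Xᵀ = X := hXsymm
    rwa [transpose_mul, transpose_mul, hS, hXt, hQt] at this
  have hMP : IsMoorePenrose X (S * S) := by
    refine ⟨?_, ?_, ?_, ?_⟩
    · rw [hXP, ← hF, ← Matrix.mul_assoc, hFSF]
    · rw [hPX, hFS, ← Matrix.mul_assoc, hSFS]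
    · rw [hXP, hQt]
    · rw [hPX, hQt]
  have h3 := h2 V hV hXV (S * S) hMP (F * Δ + Δ * F)
    (by simp [Matrix.IsSymm, transpose_add, transpose_mul, hFt, hΔt, add_comm])
    (by
      rw [Matrix.mul_add, Matrix.add_mul, ← Matrix.mul_assoc, hVF]
      simp only [Matrix.mul_assoc, hFV]
      simp)
  have hFPF : F * (S * S) * F = F * S := by
    calc F * (S * S) * F = F * S * (S * F) := by simp only [Matrix.mul_assoc]
      _ = F * S := by rw [← hFS, hQQ]
  have htr : ((F * Δ + Δ * F) * (S * S) * (F * Δ + Δ * F) * G).trace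
      = (G * (Δ * (F * S) * Δ)).trace := by
    have e1 : (F * Δ + Δ * F) * G = F * Δ * G := by
      rw [Matrix.add_mul, Matrix.mul_assoc Δ, hFG]; simp
    have e2 : G * (F * Δ + Δ * F) = G * Δ * F := by
      rw [Matrix.mul_add, ← Matrix.mul_assoc, hGF]; simp [Matrix.mul_assoc]
    calc _ = (((F * Δ + Δ * F) * (S * S) * (F * Δ)) * G).trace := by
          rw [Matrix.mul_assoc _ _ G, e1]; simp only [Matrix.mul_assoc]
      _ = (G * (F * Δ + Δ * F) * (S * S) * (F * Δ)).trace := by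
          rw [Matrix.trace_mul_comm]; simp only [Matrix.mul_assoc]
      _ = (G * (Δ * (F * (S * S) * F) * Δ)).trace := by
          rw [e2]; simp only [Matrix.mul_assoc]
      _ = _ := by rw [hFPF]
  have hpos : 0 ≤ (G * (Δ * (1 - F * S) * Δ)).trace := by
    have hp := (hG.mul_mul_conjTranspose_same ((1 - F * S) * Δ)).trace_nonneg
    have e : (1 - F * S) * (1 - F * S) = 1 - F * S := by
      rw [Matrix.sub_mul, Matrix.mul_sub (F * S), hQQ]; simp
    rw [conjTranspose_eq_transpose_of_trivial, transpose_mul, transpose_sub, transpose_one, hQt,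
      hΔt, Matrix.mul_assoc, Matrix.trace_mul_comm] at hp
    have e' : G * (Δ * (1 - F * S) * Δ) = G * (Δ * (1 - F * S)) * ((1 - F * S) * Δ) := by
      conv_lhs => rw [← e]
      simp only [Matrix.mul_assoc]
    rw [e']
    exact hp
  have hsub : (G * (Δ * (1 - F * S) * Δ)).trace
      = (G * (Δ * Δ)).trace - (G * (Δ * (F * S) * Δ)).trace := by
    rw [← Matrix.trace_sub, ← Matrix.mul_sub, Matrix.mul_sub Δ, Matrix.sub_mul, Matrix.mul_one]
  rw [htr] at h3
  linarith
end

section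
/- If a symmetric matrix F ∈ S^d satisfies the second-order necessary conditions (2NC) for problem (DSS-Sym), then the matrix X = F² satisfies the first-order conditions (1C) for problem (BC). -/
open Matrix

/-- If a symmetric `F ∈ S^d` satisfies 2NC for (DSS-Sym), then `X = F²` satisfies the
first-order conditions (1C) for (BC). -/
theorem statement6 {d : ℕ} (h : Matrix (Fin d) (Fin d) ℝ → ℝ)
    (gh : Matrix (Fin d) (Fin d) ℝ → Matrix (Fin d) (Fin d) ℝ)
    (hsm : ContDiff ℝ 2 (fun A : Fin d → Fin d → ℝ => h (Matrix.of A)))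
    (hgrad : IsGradient h gh)
    (F : Matrix (Fin d) (Fin d) ℝ) (hFsymm : F.IsSymm)
    (hF : DSSSym2NC h gh F) :
    BC1C gh (F * F) := by
  obtain ⟨h1, h2⟩ := hF
  have hGs : (gh (F * F)).IsSymm := by
    apply hgrad.1
    rw [Matrix.IsSymm, Matrix.transpose_mul, hFsymm.eq]
  generalize hG : gh (F * F) = G at h1 h2 hGs
  have hac : G * F = -(F * G) := by
    have h3 : (2⁻¹ : ℝ) • (G * Fᵀ + F * Gᵀ) = 0 := h1
    rw [hFsymm.eq, hGs.eq] at h3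
    have h4 := (smul_eq_zero.mp h3).resolve_left (by norm_num)
    exact eq_neg_of_add_eq_zero_left h4
  have hW : ∀ Δ : Matrix (Fin d) (Fin d) ℝ, Δ.IsSymm →
      (2 : ℝ) • symProd F Δ = F * Δ + Δ * F := by
    intro Δ hΔ
    rw [symProd, smul_smul, hΔ.eq, hFsymm.eq]
    norm_num
  have hcomm : G * (F * F) = F * F * G := by
    rw [← mul_assoc, hac, neg_mul, mul_assoc F G F, hac, mul_neg, neg_neg, mul_assoc]
  have hXs : (F * F).IsSymm := by
    rw [Matrix.IsSymm, Matrix.transpose_mul, hFsymm.eq]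
  have hKs : (G * (F * F)).IsSymm := by
    rw [Matrix.IsSymm, Matrix.transpose_mul, hXs.eq, hGs.eq, hcomm]
  have hKac : F * (G * (F * F)) + (G * (F * F)) * F = 0 := by
    have : (G * (F * F)) * F = (G * F) * (F * F) := by simp only [mul_assoc]
    rw [this, hac, neg_mul, mul_assoc F G]
    exact add_neg_cancel _
  -- key step
  have hK : G * (F * F) = 0 := by
    set X := F * F with hX
    set K := G * X with hKdef
    have hcub : (G * (K * K)).trace = 0 := by
      have e1 : G * (K * K) = (G * K * G * F) * F := by
        rw [hKdef, hX]; simp only [mul_assoc]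
      have e2 : F * (G * K * G * F) = -(G * (K * K)) := by
        have hFG : F * G = -(G * F) := by rw [hac, neg_neg]
        have hFK : F * K = -(K * F) := eq_neg_of_add_eq_zero_left hKac
        calc F * (G * K * G * F) = (F * G) * K * G * F := by simp only [mul_assoc]
          _ = -(G * (F * K) * G * F) := by rw [hFG]; simp only [mul_assoc, neg_mul]
          _ = G * K * (F * G) * F := by
              rw [hFK]; simp only [mul_assoc, neg_mul, mul_neg, neg_neg]
          _ = -(G * K * G * F * F) := by
              rw [hFG]; simp only [mul_assoc, neg_mul, mul_neg]
          _ = _ := by rw [e1]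
      have e3 : (G * (K * K)).trace = -(G * (K * K)).trace := by
        conv_lhs => rw [e1, Matrix.trace_mul_comm, e2, Matrix.trace_neg]
      linarith
    have hq : ∀ t : ℝ, 0 ≤ (D2 h X (F * X + X * F) + 2 * (G * (X * X)).trace)
        + 4 * t * (K * K).trace := by
      intro t
      have hs : (X + t • K).IsSymm := hXs.add (hKs.smul t)
      have h3 := h2 _ hs
      rw [hW _ hs] at h3
      have e1 : F * (X + t • K) + (X + t • K) * F = F * X + X * F := by
        have : F * (X + t • K) + (X + t • K) * F = F * X + X * F + t • (F * K + K * F) := by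
          simp only [mul_add, add_mul, smul_add, mul_smul_comm, smul_mul_assoc]; abel
        rw [this, hKac, smul_zero, add_zero]
      have e4 : G * (X * K) = K * K := by rw [← mul_assoc]
      have e5 : (G * (K * X)).trace = (K * K).trace := by
        rw [← mul_assoc, Matrix.trace_mul_comm, ← mul_assoc, ← hcomm]
      have e2 : (G * ((X + t • K) * (X + t • K))).trace
          = (G * (X * X)).trace + 2 * t * (K * K).trace := by
        simp only [mul_add, add_mul, mul_smul_comm, smul_mul_assoc, Matrix.trace_add,
          Matrix.trace_smul, hcub, e4, e5, smul_eq_mul]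
        ring
      rw [e1, e2] at h3
      linarith
    have hz : (K * K).trace = 0 := by
      by_contra hne
      have h3 := hq (-(D2 h X (F * X + X * F) + 2 * (G * (X * X)).trace + 1)
        / (4 * (K * K).trace))
      have : 4 * (-(D2 h X (F * X + X * F) + 2 * (G * (X * X)).trace + 1)
        / (4 * (K * K).trace)) * (K * K).trace =
          -(D2 h X (F * X + X * F) + 2 * (G * (X * X)).trace + 1) := by
        field_simp
      linarith
    have hz2 : (Kᴴ * K).trace = 0 := by
      rw [Matrix.conjTranspose_eq_transpose_of_trivial, hKs.eq, hz]
    exact Matrix.trace_conjTranspose_mul_self_eq_zero_iff.mp hz2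
  have hFG : F * G = 0 := by
    have : (F * G)ᴴ * (F * G) = 0 := by
      rw [Matrix.conjTranspose_eq_transpose_of_trivial, Matrix.transpose_mul, hFsymm.eq, hGs.eq,
        mul_assoc, ← mul_assoc F, ← mul_assoc, hK, zero_mul]
    exact Matrix.conjTranspose_mul_self_eq_zero.mp this
  have hGh : G.IsHermitian := by
    rw [Matrix.IsHermitian, Matrix.conjTranspose_eq_transpose_of_trivial, hGs.eq]
  refine ⟨?_, ?_, ?_⟩
  · have := Matrix.posSemidef_conjTranspose_mul_self F
    rwa [Matrix.conjTranspose_eq_transpose_of_trivial, hFsymm.eq] at this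
  · rw [hG, hGh.posSemidef_iff_eigenvalues_nonneg]
    intro i
    by_contra hneg
    have hlt : hGh.eigenvalues i < 0 := by simpa using hneg
    set μ := hGh.eigenvalues i with hμ
    set u : Fin d → ℝ := ⇑(hGh.eigenvectorBasis i) with hu
    have hGu : G *ᵥ u = μ • u := hGh.mulVec_eigenvectorBasis i
    have hFu : F *ᵥ u = 0 := by
      have h3 : F *ᵥ (G *ᵥ u) = 0 := by rw [Matrix.mulVec_mulVec, hFG, Matrix.zero_mulVec]
      rw [hGu, Matrix.mulVec_smul] at h3
      exact (smul_eq_zero.mp h3).resolve_left hlt.ne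
    have huu : 0 < u ⬝ᵥ u := by
      have hne : u ≠ 0 := by
        intro h0
        apply hGh.eigenvectorBasis.orthonormal.ne_zero i
        ext j
        exact congrFun h0 j
      have := Matrix.dotProduct_star_self_pos_iff.mpr hne
      simpa using this
    have hs : (Matrix.vecMulVec u u).IsSymm := by
      rw [Matrix.IsSymm, Matrix.transpose_vecMulVec]
    have h3 := h2 _ hs
    have e1 : F * Matrix.vecMulVec u u = 0 := by
      rw [Matrix.mul_vecMulVec, hFu, Matrix.zero_vecMulVec]
    have e2 : Matrix.vecMulVec u u * F = 0 := by
      have := congrArg Matrix.transpose e1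
      rwa [Matrix.transpose_mul, hs.eq, hFsymm.eq, Matrix.transpose_zero] at this
    have e3 : D2 h (F * F) 0 = 0 := by
      simp [D2, iteratedDeriv_const]
    have e4 : (G * (Matrix.vecMulVec u u * Matrix.vecMulVec u u)).trace
        = μ * (u ⬝ᵥ u) * (u ⬝ᵥ u) := by
      rw [Matrix.mul_vecMulVec, Matrix.mul_vecMulVec, Matrix.trace_vecMulVec]
      have e5 : Matrix.vecMulVec u u *ᵥ u = (u ⬝ᵥ u) • u := by
        rw [Matrix.vecMulVec_mulVec]
        ext j
        simp [mul_comm]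
      rw [e5, Matrix.mulVec_smul, hGu, smul_dotProduct, smul_dotProduct, smul_eq_mul, smul_eq_mul]
      ring
    rw [hW _ hs, e1, e2, add_zero, e3, e4, zero_add] at h3
    nlinarith [mul_pos huu huu]
  · rw [hG, hK]
end

section
/- If a symmetric matrix F ∈ S^d satisfies the second-order necessary conditions (2NC) for problem (DSS-Sym) and, in addition, F satisfies the eigenvalue condition (EC), then the matrix X = F² satisfies the second-order necessary conditions (2NC) for problem (BC). -/
open Matrix

lemma s7_diag {d : ℕ} (F : Matrix (Fin d) (Fin d) ℝ) (hF : F.IsSymm) :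
    ∃ (U : Matrix (Fin d) (Fin d) ℝ) (s : Fin d → ℝ), Uᵀ * U = 1 ∧ U * Uᵀ = 1 ∧
      F = U * diagonal s * Uᵀ ∧ (F * F).rank = Fintype.card {i // s i ≠ 0} ∧
      ∀ i, IsEigOf F (s i) := by
  have hH : F.IsHermitian := by
    rw [Matrix.IsHermitian, conjTranspose_eq_transpose_of_trivial]; exact hF
  have h1 : (hH.eigenvectorUnitary : Matrix (Fin d) (Fin d) ℝ)ᵀ * hH.eigenvectorUnitary = 1 := by
    have := Unitary.coe_star_mul_self hH.eigenvectorUnitary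
    rwa [star_eq_conjTranspose, conjTranspose_eq_transpose_of_trivial] at this
  refine ⟨hH.eigenvectorUnitary, hH.eigenvalues, h1, mul_eq_one_comm.mp h1, ?_, ?_, ?_⟩
  · have := hH.spectral_theorem
    rw [Unitary.conjStarAlgAut_apply, star_eq_conjTranspose,
      conjTranspose_eq_transpose_of_trivial] at this
    exact this
  · rw [← hH.rank_eq_card_non_zero_eigs]
    have := rank_self_mul_conjTranspose F
    rwa [hH.eq] at this
  · intro i
    refine ⟨_, ?_, hH.mulVec_eigenvectorBasis i⟩
    intro h0
    have := hH.star_eigenvectorUnitary_mulVec i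
    rw [h0, mulVec_zero] at this
    have := congrFun this i
    simp at this

lemma s7_cancel {d : ℕ} {U : Matrix (Fin d) (Fin d) ℝ} (h1 : Uᵀ * U = 1)
    (A B : Matrix (Fin d) (Fin d) ℝ) :
    (U * A * Uᵀ) * (U * B * Uᵀ) = U * (A * B) * Uᵀ := by
  calc _ = U * A * (Uᵀ * U) * B * Uᵀ := by noncomm_ring
    _ = _ := by rw [h1]; noncomm_ring

lemma s7_spec {d : ℕ} (F : Matrix (Fin d) (Fin d) ℝ) (hF : F.IsSymm) (hEC : EigCond F) :
    ∃ Z J : Matrix (Fin d) (Fin d) ℝ, Zᵀ = Z ∧ Z * Z = Z ∧ F * Z = 0 ∧ Z * F = 0 ∧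
      J * F = 1 - Z ∧ F * J = 1 - Z ∧ Z.trace = ((d - (F * F).rank : ℕ) : ℝ) ∧
      (∀ G : Matrix (Fin d) (Fin d) ℝ, G * F + F * G = 0 → G * F = 0 ∧ F * G = 0) ∧
      (∀ W : Matrix (Fin d) (Fin d) ℝ, W.IsSymm → Z * W * Z = 0 →
        ∃ D : Matrix (Fin d) (Fin d) ℝ, D.IsSymm ∧ F * D + D * F = W ∧ Z * D * Z = 0) := by
  obtain ⟨U, s, h1, h2, hFU, hr, heig⟩ := s7_diag F hF
  have key : ∀ i j, s i + s j = 0 → s i = 0 ∧ s j = 0 := by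
    intro i j hij
    by_cases hi : s i = 0
    · exact ⟨hi, by linarith⟩
    · exact absurd hij (hEC _ _ (heig i) (heig j) hi (fun h => hi (by linarith)))
  have conj : ∀ M : Matrix (Fin d) (Fin d) ℝ, U * (Uᵀ * M * U) * Uᵀ = M := by
    intro M
    calc _ = (U * Uᵀ) * M * (U * Uᵀ) := by noncomm_ring
      _ = M := by rw [h2]; simp
  have inj : ∀ M : Matrix (Fin d) (Fin d) ℝ, U * M * Uᵀ = 0 → M = 0 := by
    intro M hM
    calc M = (Uᵀ * U) * M * (Uᵀ * U) := by rw [h1]; simp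
      _ = Uᵀ * (U * M * Uᵀ) * U := by noncomm_ring
      _ = 0 := by rw [hM]; simp
  have hone : (1 : Matrix (Fin d) (Fin d) ℝ) = U * 1 * Uᵀ := by rw [mul_one, h2]
  set z : Fin d → ℝ := fun i => if s i = 0 then 1 else 0 with hz
  have hJ : (1 : Matrix (Fin d) (Fin d) ℝ) - U * diagonal z * Uᵀ
      = U * diagonal (fun i => s i * (s i)⁻¹) * Uᵀ := by
    conv_lhs => rw [hone]
    rw [← sub_mul, ← mul_sub, ← diagonal_one, diagonal_sub]
    congr 3
    funext i
    by_cases hi : s i = 0 <;> simp [hz, hi]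
  refine ⟨U * diagonal z * Uᵀ, U * diagonal (fun i => (s i)⁻¹) * Uᵀ, ?_, ?_, ?_, ?_, ?_, ?_, ?_,
    ?_, ?_⟩
  · simp [transpose_mul, mul_assoc]
  · rw [s7_cancel h1, diagonal_mul_diagonal]
    congr 3
    funext i
    by_cases hi : s i = 0 <;> simp [hz, hi]
  · rw [hFU, s7_cancel h1, diagonal_mul_diagonal]
    have : (fun i => s i * z i) = 0 := by
      funext i
      by_cases hi : s i = 0 <;> simp [hz, hi]
    rw [this]; simp
  · rw [hFU, s7_cancel h1, diagonal_mul_diagonal]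
    have : (fun i => z i * s i) = 0 := by
      funext i
      by_cases hi : s i = 0 <;> simp [hz, hi]
    rw [this]; simp
  · rw [hJ, hFU, s7_cancel h1, diagonal_mul_diagonal]
    congr 3
    funext i
    ring
  · rw [hJ, hFU, s7_cancel h1, diagonal_mul_diagonal]
  · rw [hr, trace_mul_comm, ← mul_assoc, h1, one_mul, trace_diagonal]
    have hc := Fintype.card_subtype_compl (fun i => s i ≠ 0)
    rw [Fintype.card_fin] at hc
    rw [← hc]
    simp [hz, Fintype.card_subtype]
  · intro G hG
    rw [← conj G, hFU, s7_cancel h1, s7_cancel h1, ← add_mul, ← mul_add] at hG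
    have hG' := inj _ hG
    have he : ∀ i j, s i + s j ≠ 0 → (Uᵀ * G * U) i j = 0 := by
      intro i j hij
      have := congrFun (congrFun hG' i) j
      simp only [Matrix.add_apply, mul_diagonal, diagonal_mul, Matrix.zero_apply] at this
      have h3 : (s i + s j) * (Uᵀ * G * U) i j = 0 := by linarith
      exact (mul_eq_zero.mp h3).resolve_left hij
    constructor
    · rw [← conj G, hFU, s7_cancel h1]
      have : (Uᵀ * G * U) * diagonal s = 0 := by
        ext i j
        rw [mul_diagonal]
        by_cases hij : s i + s j = 0
        · simp [(key i j hij).2]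
        · simp [he i j hij]
      rw [this]; simp
    · rw [← conj G, hFU, s7_cancel h1]
      have : diagonal s * (Uᵀ * G * U) = 0 := by
        ext i j
        rw [diagonal_mul]
        by_cases hij : s i + s j = 0
        · simp [(key i j hij).1]
        · simp [he i j hij]
      rw [this]; simp
  · intro W hW hZ
    rw [← conj W, s7_cancel h1, s7_cancel h1] at hZ
    have hZ' := inj _ hZ
    have hWs : (Uᵀ * W * U)ᵀ = Uᵀ * W * U := by
      simp [transpose_mul, mul_assoc, hW.eq]
    set W' := Uᵀ * W * U with hW'
    refine ⟨U * of (fun i j => W' i j / (s i + s j)) * Uᵀ, ?_, ?_, ?_⟩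
    · rw [IsSymm, transpose_mul, transpose_mul, transpose_transpose, mul_assoc]
      congr 2
      ext i j
      have := congrFun (congrFun hWs i) j
      rw [transpose_apply] at this
      simp [this, add_comm]
    · rw [← conj W, hFU, s7_cancel h1, s7_cancel h1, ← add_mul, ← mul_add]
      congr 2
      ext i j
      simp only [Matrix.add_apply, mul_diagonal, diagonal_mul, of_apply]
      by_cases hij : s i + s j = 0
      · obtain ⟨hi, hj⟩ := key i j hij
        have := congrFun (congrFun hZ' i) j
        simp [mul_diagonal, diagonal_mul, hz, hi, hj] at this
        simp [hi, hj, ← hW', this]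
      · rw [← hW']; field_simp
    · rw [s7_cancel h1, s7_cancel h1]
      have : diagonal z * of (fun i j => W' i j / (s i + s j)) * diagonal z = 0 := by
        ext i j
        rw [mul_diagonal, diagonal_mul]
        by_cases hi : s i = 0 <;> by_cases hj : s j = 0 <;> simp [hz, hi, hj]
      rw [this]; simp

lemma s7_proj {d k : ℕ} (Z : Matrix (Fin d) (Fin d) ℝ) (V : Matrix (Fin d) (Fin k) ℝ)
    (hZs : Zᵀ = Z) (hZZ : Z * Z = Z) (hV : Vᵀ * V = 1) (hZV : Z * V = V)
    (ht : Z.trace = (k : ℝ)) : Z = V * Vᵀ := by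
  have hVZ : Vᵀ * Z = Vᵀ := by
    have := congrArg transpose hZV
    rwa [transpose_mul, hZs] at this
  have hQQ : V * Vᵀ * (V * Vᵀ) = V * Vᵀ := by
    rw [Matrix.mul_assoc, ← Matrix.mul_assoc Vᵀ, hV, Matrix.one_mul]
  have hsq : (Z - V * Vᵀ)ᵀ * (Z - V * Vᵀ) = Z - V * Vᵀ := by
    rw [transpose_sub, transpose_mul, transpose_transpose, hZs, sub_mul, mul_sub, mul_sub, hZZ,
      hQQ, Matrix.mul_assoc V, hVZ, ← Matrix.mul_assoc Z, hZV]
    abel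
  have htr : ((Z - V * Vᵀ)ᴴ * (Z - V * Vᵀ)).trace = 0 := by
    rw [conjTranspose_eq_transpose_of_trivial, hsq, trace_sub, trace_mul_comm V, hV, ht]
    simp
  have := trace_conjTranspose_mul_self_eq_zero_iff.mp htr
  exact sub_eq_zero.mp this

lemma s7_psd {d : ℕ} (h : Matrix (Fin d) (Fin d) ℝ → ℝ)
    (gh : Matrix (Fin d) (Fin d) ℝ → Matrix (Fin d) (Fin d) ℝ)
    (F Z : Matrix (Fin d) (Fin d) ℝ) (hFs : F.IsSymm) (hZs : Zᵀ = Z)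
    (hF : DSSSym2NC h gh F) (hFZ : F * Z = 0) (hGs : (gh (F * F)).IsSymm)
    (hG : Z * gh (F * F) * Z = gh (F * F)) : (gh (F * F)).PosSemidef := by
  apply Matrix.PosSemidef.of_dotProduct_mulVec_nonneg
  · rw [Matrix.IsHermitian, conjTranspose_eq_transpose_of_trivial]; exact hGs
  intro x
  set G := gh (F * F) with hGdef
  set v := Z *ᵥ x with hv
  have hFv : F *ᵥ v = 0 := by rw [hv, mulVec_mulVec, hFZ, zero_mulVec]
  have e1 : star x ⬝ᵥ G *ᵥ x = v ⬝ᵥ G *ᵥ v := by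
    rw [star_trivial]
    conv_lhs => rw [← hG]
    rw [hv, ← mulVec_mulVec, ← mulVec_mulVec, dotProduct_mulVec x Z, ← mulVec_transpose, hZs]
  rw [e1]
  have hs : (vecMulVec v v).IsSymm := by rw [IsSymm, transpose_vecMulVec]
  have h2 := hF.2 (vecMulVec v v) hs
  have hFD : F * vecMulVec v v = 0 := by rw [mul_vecMulVec, hFv, zero_vecMulVec]
  have hDF : vecMulVec v v * F = 0 := by
    have := congrArg transpose hFD
    rwa [transpose_mul, hs.eq, hFs.eq, transpose_zero] at this
  have hsp : symProd F (vecMulVec v v) = 0 := by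
    rw [symProd, hs.eq, hFs.eq, hFD, hDF]; simp
  have hD : D2 h (F * F) ((2 : ℝ) • symProd F (vecMulVec v v)) = 0 := by
    rw [hsp]; simp [D2, iteratedDeriv_const]
  rw [hD, vecMulVec_mul_vecMulVec] at h2
  have h3 : (gh (F * F) * vecMulVec v ((v ⬝ᵥ v) • v)).trace = (v ⬝ᵥ v) * (v ⬝ᵥ G *ᵥ v) := by
    rw [mul_vecMulVec, trace_vecMulVec, dotProduct_smul, smul_eq_mul, hGdef,
      dotProduct_comm (gh (F * F) *ᵥ v)]
  by_cases hv0 : v ⬝ᵥ v = 0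
  · rw [dotProduct_self_eq_zero.mp hv0]; simp
  · have hp : 0 < v ⬝ᵥ v := lt_of_le_of_ne (by
      have := dotProduct_star_self_nonneg v
      simpa using this) (Ne.symm hv0)
    rw [h3] at h2
    exact nonneg_of_mul_nonneg_right (by linarith) hp

/-- If a symmetric `F ∈ S^d` satisfies 2NC for (DSS-Sym) and the eigenvalue condition (EC),
then `X = F²` satisfies 2NC for (BC). -/
theorem statement7 {d : ℕ} (h : Matrix (Fin d) (Fin d) ℝ → ℝ)
    (gh : Matrix (Fin d) (Fin d) ℝ → Matrix (Fin d) (Fin d) ℝ)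
    (hsm : ContDiff ℝ 2 (fun A : Fin d → Fin d → ℝ => h (Matrix.of A)))
    (hgrad : IsGradient h gh)
    (F : Matrix (Fin d) (Fin d) ℝ) (hFsymm : F.IsSymm)
    (hF : DSSSym2NC h gh F) (hEC : EigCond F) :
    BC2NC h gh (F * F) := by
  obtain ⟨Z, J, hZs, hZZ, hFZ, hZF, hJF, hFJ, htr, hGc, hWc⟩ := s7_spec F hFsymm hEC
  have hXs : (F * F).IsSymm := by rw [IsSymm, transpose_mul, hFsymm.eq]
  have hGs : (gh (F * F)).IsSymm := hgrad.1 _ hXs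
  have h1 := hF.1
  rw [symProd, hFsymm.eq, hGs.eq] at h1
  obtain ⟨hGF, hFG⟩ := hGc _ ((smul_eq_zero.mp h1).resolve_left (by norm_num))
  have hGZ : gh (F * F) * Z = gh (F * F) := by
    have : gh (F * F) * (1 - Z) = 0 := by rw [← hFJ, ← mul_assoc, hGF, zero_mul]
    rw [mul_sub, mul_one] at this
    exact (sub_eq_zero.mp this).symm
  have hZG : Z * gh (F * F) = gh (F * F) := by
    have := congrArg transpose hGZ
    rwa [transpose_mul, hZs, hGs.eq] at this
  refine ⟨⟨?_, ?_, ?_⟩, ?_⟩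
  · have := posSemidef_self_mul_conjTranspose F
    rwa [conjTranspose_eq_transpose_of_trivial, hFsymm.eq] at this
  · exact s7_psd h gh F Z hFsymm hZs hF hFZ hGs (by rw [hZG, hGZ])
  · rw [← mul_assoc, hGF, zero_mul]
  intro V hV hXV P hP W hW hVW
  have hFFJ : J * (F * F) = F := by
    rw [← mul_assoc, hJF, sub_mul, hZF, one_mul, sub_zero]
  have hFFJ' : (F * F) * J = F := by
    rw [mul_assoc, hFJ, mul_sub, hFZ, mul_one, sub_zero]
  have hFV : F * V = 0 := by
    calc F * V = (J * (F * F)) * V := congrArg (fun M => M * V) hFFJ.symm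
      _ = 0 := by rw [Matrix.mul_assoc, hXV, Matrix.mul_zero]
  have hZV : Z * V = V := by
    have : (1 - Z) * V = 0 := by rw [← hJF, Matrix.mul_assoc, hFV, Matrix.mul_zero]
    rw [Matrix.sub_mul, Matrix.one_mul] at this
    exact (sub_eq_zero.mp this).symm
  have hZ : Z = V * Vᵀ := s7_proj Z V hZs hZZ hV hZV htr
  have hZW : Z * W * Z = 0 := by
    have : Z * W * Z = V * (Vᵀ * W * V) * Vᵀ := by
      rw [hZ]; simp only [Matrix.mul_assoc]
    rw [this, hVW, Matrix.mul_zero, Matrix.zero_mul]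
  obtain ⟨D, hD, hDW, hZD⟩ := hWc W hW hZW
  have hFPF : F * P * F = 1 - Z := by
    have e : J * ((F * F) * P * (F * F)) * J = F * P * F := by
      calc _ = (J * (F * F)) * P * ((F * F) * J) := by simp only [mul_assoc]
        _ = _ := by rw [hFFJ, hFFJ']
    rw [← e, hP.1, hFFJ, hFJ]
  have h2 := hF.2 D hD
  have hsp : (2 : ℝ) • symProd F D = W := by
    rw [symProd, hD.eq, hFsymm.eq, hDW, smul_smul]; norm_num
  rw [hsp] at h2
  set G := gh (F * F) with hGdef
  have hWG : W * G = F * D * G := by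
    rw [← hDW, add_mul, mul_assoc D, hFG, mul_zero, add_zero]
  have hGW : G * W = G * D * F := by
    rw [← hDW, mul_add, ← mul_assoc, hGF, zero_mul, zero_add, mul_assoc]
  have htrace : (W * P * W * G).trace = (G * (D * D)).trace := by
    calc (W * P * W * G).trace = (W * P * (F * D * G)).trace := by rw [mul_assoc _ W G, hWG]
      _ = (W * (P * F * D) * G).trace := by simp only [mul_assoc]
      _ = (G * W * (P * F * D)).trace := by rw [trace_mul_comm, ← mul_assoc]
      _ = (G * D * (F * P * F) * D).trace := by rw [hGW]; simp only [mul_assoc]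
      _ = (G * (D * D)).trace - (G * D * Z * D).trace := by
        rw [hFPF, ← trace_sub]; congr 1; noncomm_ring
      _ = (G * (D * D)).trace := by
        have : (G * D * Z * D).trace = 0 := by
          rw [← hGZ, ← hZG]
          calc (Z * G * Z * D * Z * D).trace = (Z * (G * (Z * D * Z) * D)).trace := by
                simp only [mul_assoc]
            _ = 0 := by rw [hZD]; simp
        rw [this, sub_zero]
  rw [htrace]
  exact h2
end

section
/- Let F ∈ S^d and S ∈ S^d satisfy S∘F = 0. If for every Δ ∈ S^d with 2F∘Δ = 0 one has 2·tr(SΔ²) ≥ 0, and F satisfies the eigenvalue condition (EC), then S ⪰ 0. -/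
open Matrix

/-- Let `F, S ∈ S^d` with `S∘F = 0`. If `2·tr(SΔ²) ≥ 0` for every symmetric `Δ` with
`2F∘Δ = 0`, and `F` satisfies the eigenvalue condition (EC), then `S ⪰ 0`. -/
theorem statement8 {d : ℕ}
    (F S : Matrix (Fin d) (Fin d) ℝ) (hFsymm : F.IsSymm) (hSsymm : S.IsSymm)
    (hSF : symProd S F = 0)
    (hineq : ∀ Δ : Matrix (Fin d) (Fin d) ℝ, Δ.IsSymm →
      (2 : ℝ) • symProd F Δ = 0 → 0 ≤ 2 * (S * (Δ * Δ)).trace)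
    (hEC : EigCond F) :
    S.PosSemidef := by
  have hcomm : S * F + F * S = 0 := by
    have h := hSF
    unfold symProd at h
    rw [hFsymm.eq, hSsymm.eq] at h
    exact (smul_eq_zero.mp h).resolve_left (by norm_num)
  have hFh : F.IsHermitian := by
    rw [Matrix.IsHermitian, Matrix.conjTranspose_eq_transpose_of_trivial]; exact hFsymm
  have hSh : S.IsHermitian := by
    rw [Matrix.IsHermitian, Matrix.conjTranspose_eq_transpose_of_trivial]; exact hSsymm
  have key : ∀ (a : ℝ) (v : Fin d → ℝ), v ≠ 0 → F *ᵥ v = a • v → (S * F) *ᵥ v = 0 := by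
    intro a v hv hav
    by_cases ha : a = 0
    · rw [← Matrix.mulVec_mulVec, hav, ha]; simp
    have h1 : S *ᵥ v = 0 := by
      by_contra hne
      refine hEC a (-a) ⟨v, hv, hav⟩ ⟨S *ᵥ v, hne, ?_⟩ ha (neg_ne_zero.mpr ha) (by ring)
      have h2 : (S * F + F * S) *ᵥ v = 0 := by rw [hcomm]; simp
      rw [Matrix.add_mulVec, ← Matrix.mulVec_mulVec, ← Matrix.mulVec_mulVec, hav,
        Matrix.mulVec_smul] at h2
      rw [neg_smul]
      exact eq_neg_of_add_eq_zero_right h2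
    rw [← Matrix.mulVec_mulVec, hav, Matrix.mulVec_smul, h1, smul_zero]
  have hSF0 : S * F = 0 := by
    apply (Matrix.toEuclideanLin (𝕜 := ℝ)).injective
    apply hFh.eigenvectorBasis.toBasis.ext
    intro j
    have h := key _ _ (by
      intro h0
      apply hFh.eigenvectorBasis.toBasis.ne_zero j
      rw [OrthonormalBasis.coe_toBasis]
      ext i
      exact congrFun h0 i) (hFh.mulVec_eigenvectorBasis j)
    rw [OrthonormalBasis.coe_toBasis]
    ext i
    simpa using congrFun h i
  have hFS0 : F * S = 0 := by simpa [hSF0] using hcomm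
  rw [hSh.posSemidef_iff_eigenvalues_nonneg]
  intro j
  by_contra hneg
  simp only [Pi.zero_apply, not_le] at hneg
  have hv := hSh.mulVec_eigenvectorBasis j
  have hv0 : (hSh.eigenvectorBasis j).ofLp ≠ 0 := by
    intro h0
    apply hSh.eigenvectorBasis.toBasis.ne_zero j
    rw [OrthonormalBasis.coe_toBasis]
    ext i
    exact congrFun h0 i
  generalize (hSh.eigenvectorBasis j).ofLp = v at hv hv0
  generalize hSh.eigenvalues j = s at hv hneg
  have hFv : F *ᵥ v = 0 := by
    have h : (F * S) *ᵥ v = 0 := by rw [hFS0]; simp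
    rw [← Matrix.mulVec_mulVec, hv, Matrix.mulVec_smul] at h
    exact (smul_eq_zero.mp h).resolve_left hneg.ne
  have hsym : (Matrix.vecMulVec v v).IsSymm := Matrix.transpose_vecMulVec v v
  have h := hineq (Matrix.vecMulVec v v) hsym (by
    unfold symProd
    rw [hsym.eq, hFsymm.eq, Matrix.mul_vecMulVec, Matrix.vecMulVec_mul, hFv,
      ← Matrix.mulVec_transpose, hFsymm.eq, hFv]
    simp)
  rw [← Matrix.mul_assoc, Matrix.mul_vecMulVec S v v, hv, Matrix.vecMulVec_mul_vecMulVec,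
    Matrix.trace_vecMulVec] at h
  have hp : 0 < v ⬝ᵥ v := by
    have := Matrix.dotProduct_star_self_pos_iff.mpr hv0
    simpa using this
  simp only [smul_dotProduct, dotProduct_smul, smul_eq_mul] at h
  nlinarith [mul_pos hp hp, mul_pos (mul_pos hp hp) (neg_pos.mpr hneg)]
end

section
/- Let F ∈ S^d and S ∈ S^d satisfy S∘F = 0. If there is a quadratic form Q: S^d × S^d → R such that Q[W,W] + 2·tr(SΔ²) ≥ 0 for every Δ ∈ S^d with W = 2F∘Δ, then S ⪰ 0. -/
open Matrix

/-- Let `F, S ∈ S^d` with `S∘F = 0`. If there is a quadratic form `Q` such that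
`Q[W,W] + 2·tr(SΔ²) ≥ 0` for every symmetric `Δ`, where `W = 2F∘Δ`, then `S ⪰ 0`. -/
theorem statement9 {d : ℕ}
    (F S : Matrix (Fin d) (Fin d) ℝ) (hFsymm : F.IsSymm) (hSsymm : S.IsSymm)
    (hSF : symProd S F = 0)
    (hQ : ∃ Q : QuadraticForm ℝ (Matrix (Fin d) (Fin d) ℝ),
      ∀ Δ : Matrix (Fin d) (Fin d) ℝ, Δ.IsSymm →
        0 ≤ Q ((2 : ℝ) • symProd F Δ) + 2 * (S * (Δ * Δ)).trace) :
    S.PosSemidef := by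
  obtain ⟨Q, hQ⟩ := hQ
  have hF : Fᵀ = F := hFsymm
  have hS : Sᵀ = S := hSsymm
  have hac : S * F + F * S = 0 := by
    have h := hSF
    unfold symProd at h
    rw [hF, hS] at h
    exact (smul_eq_zero.mp h).resolve_left (by norm_num)
  have hQ' : ∀ D : Matrix (Fin d) (Fin d) ℝ, Dᵀ = D →
      0 ≤ Q (F * D + D * F) + 2 * (S * (D * D)).trace := by
    intro D hD
    have h := hQ D hD
    unfold symProd at h
    rwa [hF, hD, smul_smul, mul_inv_cancel₀ (by norm_num), one_smul] at h
  have hSFe : S * F = -(F * S) := eq_neg_of_add_eq_zero_left hac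
  have hFSe : F * S = -(S * F) := by rw [hSFe, neg_neg]
  have hSFF : S * F * F = F * F * S := by
    rw [hSFe, neg_mul, mul_assoc, hSFe, mul_neg, neg_neg, mul_assoc]
  -- the anticommuting direction
  have hzero : S * F = 0 := by
    obtain ⟨K, hK⟩ : ∃ K, K = S * F * F := ⟨_, rfl⟩
    have hKt : Kᵀ = K := by
      rw [hK, transpose_mul, transpose_mul, hF, hS, hSFF, mul_assoc]
    have hFK : F * K + K * F = 0 := by
      rw [hK, ← mul_assoc, ← mul_assoc, hFSe]; simp
    have hKF : K * F = -(F * K) := eq_neg_of_add_eq_zero_right hFK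
    have hcube : (S * (K * K)).trace = 0 := by
      have e2 : F * (S * K * S * F) = -(S * K * S * F * F) := by
        have hFK' : F * K = -(K * F) := by rw [hKF, neg_neg]
        calc F * (S * K * S * F) = (F * S) * K * S * F := by noncomm_ring
          _ = -(S * (F * K) * S * F) := by rw [hFSe]; noncomm_ring
          _ = S * K * (F * S) * F := by rw [hFK']; noncomm_ring
          _ = -(S * K * S * F * F) := by rw [hFSe]; noncomm_ring
      have e1 : S * (K * K) = S * K * S * F * F := by
        nth_rewrite 2 [hK]; noncomm_ring
      have e3 := trace_mul_comm F (S * K * S * F)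
      rw [e2, trace_neg] at e3
      rw [e1]; linarith
    have hlin : ∀ t : ℝ, 0 ≤ (Q (F + F) + 2 * S.trace) + t * (4 * (S * K).trace) := by
      intro t
      have h := hQ' (1 + t • K) (by simp [hKt])
      have e1 : F * (1 + t • K) + (1 + t • K) * F = F + F := by
        have : F * (1 + t • K) + (1 + t • K) * F = F + F + t • (F * K + K * F) := by
          simp only [mul_add, add_mul, mul_one, one_mul, mul_smul_comm, smul_mul_assoc, smul_add]
          abel
        rw [this, hFK]; simp
      have e2 : (S * ((1 + t • K) * (1 + t • K))).trace
          = S.trace + 2 * t * (S * K).trace + t * t * (S * (K * K)).trace := by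
        simp only [mul_add, add_mul, mul_one, one_mul, mul_smul_comm, smul_mul_assoc,
          trace_add, trace_smul, smul_eq_mul]
        ring
      rw [e1, e2, hcube] at h
      linarith
    have htr : (S * K).trace = 0 := by
      by_contra hne
      have h := hlin (-(Q (F + F) + 2 * S.trace + 1) / (4 * (S * K).trace))
      rw [div_mul_cancel₀ _ (by simpa using hne)] at h
      linarith
    have h2 : ((S * F) * (S * F)ᴴ).trace = 0 := by
      rw [conjTranspose_eq_transpose_of_trivial, transpose_mul, hF, hS, ← htr, hK,
        trace_mul_comm S]
      congr 1
      noncomm_ring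
    exact trace_mul_conjTranspose_self_eq_zero_iff.mp h2
  have hFS0 : F * S = 0 := by rw [hFSe, hzero, neg_zero]
  have hH : S.IsHermitian := by
    rw [IsHermitian, conjTranspose_eq_transpose_of_trivial, hS]
  rw [hH.posSemidef_iff_eigenvalues_nonneg]
  intro i
  by_contra hneg
  have hneg : hH.eigenvalues i < 0 := not_le.mp hneg
  obtain ⟨v, hv⟩ : ∃ v : Fin d → ℝ, v = ⇑(hH.eigenvectorBasis i) := ⟨_, rfl⟩
  have hSv : S *ᵥ v = hH.eigenvalues i • v := by
    rw [hv]; exact hH.mulVec_eigenvectorBasis i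
  have hv0 : v ≠ 0 := by
    intro h0
    apply (hH.eigenvectorBasis.orthonormal.ne_zero i)
    ext j
    have := congrFun (hv.symm.trans h0) j
    simpa using this
  have hFv : F *ᵥ v = 0 := by
    have h : F *ᵥ (S *ᵥ v) = 0 := by rw [mulVec_mulVec, hFS0, zero_mulVec]
    rw [hSv, mulVec_smul] at h
    exact (smul_eq_zero.mp h).resolve_left hneg.ne
  have hvF : v ᵥ* F = 0 := by rw [← hF, vecMul_transpose, hFv]
  have h := hQ' (vecMulVec v v) (by rw [transpose_vecMulVec])
  have hpos : 0 < v ⬝ᵥ v := by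
    have : 0 ≤ v ⬝ᵥ v := Finset.sum_nonneg fun j _ => mul_self_nonneg _
    exact lt_of_le_of_ne this fun h => hv0 (dotProduct_self_eq_zero.mp h.symm)
  rw [mul_vecMulVec, vecMulVec_mul, hFv, hvF, ← mul_assoc, mul_vecMulVec S, hSv,
    vecMulVec_mul_vecMulVec] at h
  simp [trace_vecMulVec] at h
  nlinarith [mul_pos hpos hpos, mul_neg_of_neg_of_pos hneg (mul_pos hpos hpos)]
end

section
/- If a triple (x,F,Λ) ∈ R^n × R^{d×d} × S^d satisfies the second-order necessary conditions (2NC) for problem (SSV), then the pair (x,Λ) satisfies the second-order necessary conditions (2NC) for problem (NSDP). -/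
open Matrix

/-- The directional derivative `DC_x[z]` of the matrix-valued map `C` at `x` along `z`. -/
noncomputable def DC {n d : ℕ} (C : (Fin n → ℝ) → Matrix (Fin d) (Fin d) ℝ)
    (x z : Fin n → ℝ) : Matrix (Fin d) (Fin d) ℝ :=
  Matrix.of fun i j => deriv (fun t : ℝ => C (x + t • z) i j) 0

/-- The second directional derivative `D²C_x[z,z]`. -/
noncomputable def D2C {n d : ℕ} (C : (Fin n → ℝ) → Matrix (Fin d) (Fin d) ℝ)
    (x z : Fin n → ℝ) : Matrix (Fin d) (Fin d) ℝ :=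
  Matrix.of fun i j => iteratedDeriv 2 (fun t : ℝ => C (x + t • z) i j) 0

/-- The second directional derivative `D²f_x[z,z]`. -/
noncomputable def D2f {n : ℕ} (f : (Fin n → ℝ) → ℝ) (x z : Fin n → ℝ) : ℝ :=
  iteratedDeriv 2 (fun t : ℝ => f (x + t • z)) 0

/-- First-order conditions (NSDP-1C) at `(x,Λ)`: `∇f(x) = DC_x*(Λ)` (w.r.t. the dot
product on `ℝ^n` and the trace inner product on `S^d`), `ΛC(x) = 0`, `C(x) ⪰ 0`, `Λ ⪰ 0`. -/
noncomputable def NSDP1C {n d : ℕ} (f : (Fin n → ℝ) → ℝ)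
    (C : (Fin n → ℝ) → Matrix (Fin d) (Fin d) ℝ)
    (x : Fin n → ℝ) (Λ : Matrix (Fin d) (Fin d) ℝ) : Prop :=
  Λ.IsSymm ∧
  (∀ z : Fin n → ℝ, HasDerivAt (fun t : ℝ => f (x + t • z)) ((Λ * DC C x z).trace) 0) ∧
  Λ * C x = 0 ∧ (C x).PosSemidef ∧ Λ.PosSemidef

/-- Second-order necessary conditions (NSDP-2NC) at `(x,Λ)`. -/
noncomputable def NSDP2NC {n d : ℕ} (f : (Fin n → ℝ) → ℝ)
    (C : (Fin n → ℝ) → Matrix (Fin d) (Fin d) ℝ)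
    (x : Fin n → ℝ) (Λ : Matrix (Fin d) (Fin d) ℝ) : Prop :=
  NSDP1C f C x Λ ∧
    ∀ V : Matrix (Fin d) (Fin (d - (C x).rank)) ℝ, Vᵀ * V = 1 → C x * V = 0 →
      ∀ P : Matrix (Fin d) (Fin d) ℝ, IsMoorePenrose (C x) P →
        ∀ z : Fin n → ℝ, Vᵀ * DC C x z * V = 0 →
          0 ≤ D2f f x z - (Λ * D2C C x z).trace
              + 2 * (DC C x z * P * DC C x z * Λ).trace

/-- Second-order necessary conditions (SSV-2NC) at `(x,F,Λ)`. -/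
noncomputable def SSV2NC {n d : ℕ} (f : (Fin n → ℝ) → ℝ)
    (C : (Fin n → ℝ) → Matrix (Fin d) (Fin d) ℝ)
    (x : Fin n → ℝ) (F Λ : Matrix (Fin d) (Fin d) ℝ) : Prop :=
  (Λ.IsSymm ∧
    (∀ z : Fin n → ℝ, HasDerivAt (fun t : ℝ => f (x + t • z)) ((Λ * DC C x z).trace) 0) ∧
    Λ * F = 0 ∧ C x = F * Fᵀ) ∧
  ∀ (z : Fin n → ℝ) (Δ : Matrix (Fin d) (Fin d) ℝ),
    DC C x z = F * Δᵀ + Δ * Fᵀ →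
      0 ≤ D2f f x z + 2 * (Λ * Δ * Δᵀ).trace - (Λ * D2C C x z).trace

theorem aux_mp_comm {d : ℕ} {X P : Matrix (Fin d) (Fin d) ℝ} (hX : Xᵀ = X)
    (h : IsMoorePenrose X P) : X * P = P * X ∧ Pᵀ = P := by
  obtain ⟨h1, h2, h3, h4⟩ := h
  have a3 : Pᵀ * X = X * P := by simpa [hX] using h3
  have a4 : X * Pᵀ = P * X := by simpa [hX] using h4
  have e1 : (X * P) * (P * X) = P * X := by
    rw [← a4, ← Matrix.mul_assoc, h1]
  have e2 : (P * X) * (X * P) = P * X := by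
    have := congrArg Matrix.transpose e1
    rwa [Matrix.transpose_mul, h3, h4] at this
  have e3 : (P * X) * X = X := by
    have := congrArg Matrix.transpose h1
    rwa [Matrix.mul_assoc, Matrix.transpose_mul, h4, hX] at this
  have e4 : (P * X) * (X * P) = X * P := by
    rw [← Matrix.mul_assoc, e3]
  have hc : X * P = P * X := by rw [← e4, e2]
  refine ⟨hc, ?_⟩
  have t : Pᵀ * X * Pᵀ = Pᵀ := by
    have := congrArg Matrix.transpose h2
    rwa [Matrix.mul_assoc, Matrix.transpose_mul, Matrix.transpose_mul, hX] at this
  calc Pᵀ = Pᵀ * X * Pᵀ := t.symm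
    _ = P * (X * Pᵀ) := by rw [a3, hc, Matrix.mul_assoc]
    _ = P * X * P := by rw [a4, Matrix.mul_assoc P X P, hc]
    _ = P := h2

theorem aux_trace_idem {d : ℕ} {Q : Matrix (Fin d) (Fin d) ℝ} (h : Q * Q = Q) :
    Q.trace = (Q.rank : ℝ) := by
  have hi : IsIdempotentElem (Matrix.toLin' Q) := by
    unfold IsIdempotentElem
    rw [Module.End.mul_eq_comp, ← Matrix.toLin'_mul, h]
  have := (LinearMap.IsIdempotentElem.isProj_range _ hi).trace
  rw [Matrix.trace_toLin'_eq] at this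
  rw [this]
  rfl

theorem aux_proj {d : ℕ} {X P : Matrix (Fin d) (Fin d) ℝ} (hX : Xᵀ = X)
    (h : IsMoorePenrose X P) (V : Matrix (Fin d) (Fin (d - X.rank)) ℝ)
    (hV : Vᵀ * V = 1) (hXV : X * V = 0) : 1 - X * P = V * Vᵀ := by
  obtain ⟨hc, hP⟩ := aux_mp_comm hX h
  obtain ⟨h1, h2, h3, h4⟩ := h
  have hQ : (X * P) * (X * P) = X * P := by rw [← Matrix.mul_assoc, h1]
  have hr : (X * P).rank = X.rank := by
    apply le_antisymm (Matrix.rank_mul_le_left _ _)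
    conv_lhs => rw [← h1]
    exact Matrix.rank_mul_le_left _ _
  have hle : X.rank ≤ d := by simpa using X.rank_le_width
  have hW : (X * P) * (V * Vᵀ) = 0 := by
    rw [hc, Matrix.mul_assoc, ← Matrix.mul_assoc X, hXV]; simp
  have hW' : (V * Vᵀ) * (X * P) = 0 := by
    have := congrArg Matrix.transpose hW
    rw [Matrix.transpose_mul, h3] at this
    simpa using this
  have hWW : (V * Vᵀ) * (V * Vᵀ) = V * Vᵀ := by
    rw [Matrix.mul_assoc, ← Matrix.mul_assoc Vᵀ, hV, Matrix.one_mul]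
  have htW : (V * Vᵀ).trace = (d : ℝ) - X.rank := by
    rw [Matrix.trace_mul_comm, hV, Matrix.trace_one, Fintype.card_fin, Nat.cast_sub hle]
  have htQ : (X * P).trace = X.rank := by rw [aux_trace_idem hQ, hr]
  set Q := X * P
  set W := V * Vᵀ with hWdef
  have hWt : Wᵀ = W := by simp [hWdef]
  have hz : (1 - Q - W)ᵀ * (1 - Q - W) = 1 - Q - W := by
    simp only [Matrix.transpose_sub, h3, hWt, Matrix.transpose_one]
    simp only [sub_mul, mul_sub, one_mul, mul_one, hQ, hW, hW', hWW]
    abel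
  have ht : ((1 - Q - W)ᵀ * (1 - Q - W)).trace = 0 := by
    rw [hz]
    simp [Matrix.trace_sub, htW, htQ]
  have := (Matrix.trace_conjTranspose_mul_self_eq_zero_iff (A := 1 - Q - W)).1
    (by simpa [Matrix.conjTranspose_eq_transpose_of_trivial] using ht)
  exact sub_eq_zero.1 this

theorem aux_psd {d : ℕ} {F L : Matrix (Fin d) (Fin d) ℝ} (hL : L.IsSymm) (hLF : L * F = 0)
    (h : ∀ D : Matrix (Fin d) (Fin d) ℝ, F * Dᵀ + D * Fᵀ = 0 → 0 ≤ (L * D * Dᵀ).trace) :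
    L.PosSemidef := by
  by_cases hdet : F.det = 0
  · obtain ⟨w, hw, hFw⟩ := Matrix.exists_mulVec_eq_zero_iff.2 hdet
    refine Matrix.PosSemidef.of_dotProduct_mulVec_nonneg ?_ ?_
    · rw [Matrix.IsHermitian, Matrix.conjTranspose_eq_transpose_of_trivial]; exact hL
    intro u
    have e1 : F * (Matrix.vecMulVec u w)ᵀ = 0 := by
      rw [Matrix.transpose_vecMulVec, Matrix.mul_vecMulVec, hFw]; simp
    have e2 : Matrix.vecMulVec u w * Fᵀ = 0 := by
      have := congrArg Matrix.transpose e1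
      simpa [Matrix.transpose_mul] using this
    have := h (Matrix.vecMulVec u w) (by rw [e1, e2, add_zero])
    rw [Matrix.transpose_vecMulVec, Matrix.mul_assoc, Matrix.vecMulVec_mul_vecMulVec, Matrix.mul_vecMulVec,
      Matrix.trace_vecMulVec, dotProduct_smul, smul_eq_mul] at this
    have hpos : 0 < w ⬝ᵥ w := by
      have := (Matrix.dotProduct_star_self_pos_iff (v := w)).2 hw
      simpa using this
    have := nonneg_of_mul_nonneg_right this hpos
    simpa [dotProduct_comm] using this
  · have hu : IsUnit F.det := isUnit_iff_ne_zero.2 hdet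
    have : L = 0 := by
      have := congrArg (· * F⁻¹) hLF
      simpa [Matrix.mul_assoc, Matrix.mul_nonsing_inv _ hu] using this
    rw [this]
    exact Matrix.PosSemidef.zero

/-- If `(x,F,Λ)` satisfies 2NC for (SSV), then `(x,Λ)` satisfies 2NC for (NSDP). -/
theorem statement11 {n d : ℕ} (f : (Fin n → ℝ) → ℝ)
    (C : (Fin n → ℝ) → Matrix (Fin d) (Fin d) ℝ)
    (hf : ContDiff ℝ 2 f)
    (hC : ∀ i j, ContDiff ℝ 2 fun x => C x i j)
    (hCsymm : ∀ x, (C x).IsSymm)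
    (x : Fin n → ℝ) (F Λ : Matrix (Fin d) (Fin d) ℝ)
    (h2 : SSV2NC f C x F Λ) :
    NSDP2NC f C x Λ := by
  obtain ⟨⟨hL, hg, hLF, hCF⟩, h2⟩ := h2
  have hX : (C x)ᵀ = C x := hCsymm x
  have hLX : Λ * C x = 0 := by rw [hCF, ← Matrix.mul_assoc, hLF, Matrix.zero_mul]
  refine ⟨⟨hL, hg, hLX, ?_, ?_⟩, ?_⟩
  · rw [hCF]
    simpa [Matrix.conjTranspose_eq_transpose_of_trivial] using
      Matrix.posSemidef_self_mul_conjTranspose F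
  · refine aux_psd hL hLF fun D hD => ?_
    have z1 : DC C x 0 = 0 := by ext i j; simp [DC]
    have z2 : D2C C x 0 = 0 := by ext i j; simp [D2C, iteratedDeriv_const]
    have z3 : D2f f x 0 = 0 := by simp [D2f, iteratedDeriv_const]
    have := h2 0 D (by rw [z1, hD])
    rw [z2, z3] at this
    simp at this
    linarith
  · intro V hV hXV P hMP z hz
    have hproj := aux_proj hX hMP V hV hXV
    obtain ⟨hc, hP⟩ := aux_mp_comm hX hMP
    obtain ⟨m1, m2, m3, m4⟩ := hMP
    have hA : (DC C x z)ᵀ = DC C x z := by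
      ext i j
      have : ∀ y, C y j i = C y i j := fun y => (hCsymm y).apply i j
      simp [DC, this]
    have hD := h2 z ((DC C x z - (1 / 2 : ℝ) • (C x * P * DC C x z)) * P * F)
    generalize DC C x z = A at *
    have hWAW : (1 - C x * P) * A * (1 - C x * P) = 0 := by
      rw [hproj]
      calc V * Vᵀ * A * (V * Vᵀ) = V * (Vᵀ * A * V) * Vᵀ := by
            simp only [Matrix.mul_assoc]
        _ = 0 := by rw [hz]; simp
    set Q := C x * P with hQdef
    have hLQ : Λ * Q = 0 := by rw [hQdef, ← Matrix.mul_assoc, hLX, Matrix.zero_mul]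
    have hQL : Q * Λ = 0 := by
      have := congrArg Matrix.transpose hLQ
      rwa [Matrix.transpose_mul, m3, hL.eq, Matrix.transpose_zero] at this
    set B := A - (1 / 2 : ℝ) • (Q * A) with hB
    have hBt : Bᵀ = A - (1 / 2 : ℝ) • (A * Q) := by
      rw [hB, Matrix.transpose_sub, Matrix.transpose_smul, Matrix.transpose_mul, hA, m3]
    have hLB : Λ * B = Λ * A := by
      rw [hB, Matrix.mul_sub, Matrix.mul_smul, ← Matrix.mul_assoc, hLQ]; simp
    have hBL : Bᵀ * Λ = A * Λ := by
      rw [hBt, Matrix.sub_mul, Matrix.smul_mul, Matrix.mul_assoc, hQL]; simp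
    have k1 : B * P * F * Fᵀ = B * Q := by
      rw [Matrix.mul_assoc, ← hCF, Matrix.mul_assoc, ← hc]
    have k2 : F * (B * P * F)ᵀ = Q * Bᵀ := by
      have := congrArg Matrix.transpose k1
      rwa [Matrix.transpose_mul _ Fᵀ, Matrix.transpose_transpose, Matrix.transpose_mul B, m3]
        at this
    have key := hD (by
      rw [k1, k2, hBt, hB]
      have e : A - Q * A - A * Q + Q * A * Q = 0 := by
        rw [← hWAW]; noncomm_ring
      have e' : A = Q * A + A * Q - Q * A * Q := by
        rw [← sub_eq_zero, ← e]; abel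
      rw [Matrix.mul_sub, Matrix.sub_mul, Matrix.mul_smul, Matrix.smul_mul, ← Matrix.mul_assoc]
      conv_lhs => rw [e']
      module)
    have ht : (Λ * (B * P * F) * (B * P * F)ᵀ).trace = (A * P * A * Λ).trace := by
      have e : Λ * (B * P * F) * (B * P * F)ᵀ = Λ * A * P * Bᵀ := by
        calc Λ * (B * P * F) * (B * P * F)ᵀ = (Λ * B) * P * (F * (B * P * F)ᵀ) := by
              simp only [Matrix.mul_assoc]
          _ = Λ * A * (P * C x * P) * Bᵀ := by
              rw [k2, hLB, hQdef]; simp only [Matrix.mul_assoc]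
          _ = _ := by rw [m2]
      rw [e, Matrix.trace_mul_comm, ← Matrix.mul_assoc, ← Matrix.mul_assoc, hBL,
        Matrix.mul_assoc (A * Λ), Matrix.mul_assoc A, Matrix.trace_mul_comm A,
        Matrix.trace_mul_comm (A * P * A)]
      rw [Matrix.mul_assoc Λ]
    rw [ht] at key
    linarith
end

section
/- If a point (x,Λ) ∈ R^n × S^d satisfies the second-order necessary conditions (2NC) for problem (NSDP), then any triple (x,F,Λ) with F ∈ S^d symmetric and C(x) = F² satisfies the second-order necessary conditions (2NC) for problem (SSV-Sym). -/
open Matrix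

/-- Second-order necessary conditions (SSV-Sym-2NC) at `(x,F,Λ)` with `F ∈ S^d`. -/
noncomputable def SSVSym2NC {n d : ℕ} (f : (Fin n → ℝ) → ℝ)
    (C : (Fin n → ℝ) → Matrix (Fin d) (Fin d) ℝ)
    (x : Fin n → ℝ) (F Λ : Matrix (Fin d) (Fin d) ℝ) : Prop :=
  (Λ.IsSymm ∧
    (∀ z : Fin n → ℝ, HasDerivAt (fun t : ℝ => f (x + t • z)) ((Λ * DC C x z).trace) 0) ∧
    symProd Λ F = 0 ∧ C x = F * F) ∧
  ∀ (z : Fin n → ℝ) (Δ : Matrix (Fin d) (Fin d) ℝ), Δ.IsSymm →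
    DC C x z = (2 : ℝ) • symProd Δ F →
      0 ≤ D2f f x z + 2 * (Λ * (Δ * Δ)).trace - (Λ * D2C C x z).trace

lemma exists_pinv {d : ℕ} (F : Matrix (Fin d) (Fin d) ℝ) (hF : F.IsSymm) :
    ∃ P : Matrix (Fin d) (Fin d) ℝ, P.IsSymm ∧ IsMoorePenrose (F * F) P := by
  have hH : F.IsHermitian := by
    rw [Matrix.IsHermitian, Matrix.conjTranspose_eq_transpose_of_trivial]; exact hF
  obtain ⟨U, D, hU, hFD⟩ : ∃ (U : Matrix (Fin d) (Fin d) ℝ) (D : Fin d → ℝ),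
      Uᵀ * U = 1 ∧ F = U * diagonal D * Uᵀ := by
    refine ⟨(hH.eigenvectorUnitary : Matrix (Fin d) (Fin d) ℝ), hH.eigenvalues, ?_, ?_⟩
    · have := Unitary.coe_star_mul_self hH.eigenvectorUnitary
      rwa [Matrix.star_eq_conjTranspose, Matrix.conjTranspose_eq_transpose_of_trivial] at this
    · have := hH.spectral_theorem
      rw [Unitary.conjStarAlgAut_apply, Matrix.star_eq_conjTranspose,
        Matrix.conjTranspose_eq_transpose_of_trivial] at this
      exact this
  have key : ∀ a b : Fin d → ℝ, (U * diagonal a * Uᵀ) * (U * diagonal b * Uᵀ)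
      = U * diagonal (fun i => a i * b i) * Uᵀ := by
    intro a b
    calc _ = U * diagonal a * (Uᵀ * U) * diagonal b * Uᵀ := by simp only [Matrix.mul_assoc]
      _ = _ := by rw [hU, Matrix.mul_one, Matrix.mul_assoc U, diagonal_mul_diagonal]
  have ks : ∀ a : Fin d → ℝ, (U * diagonal a * Uᵀ)ᵀ = U * diagonal a * Uᵀ := by
    intro a
    simp [Matrix.transpose_mul, Matrix.mul_assoc]
  refine ⟨U * diagonal (fun i => (D i)⁻¹ * (D i)⁻¹) * Uᵀ, ks _, ?_⟩
  subst hFD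
  refine ⟨?_, ?_, ?_, ?_⟩
  · simp only [key]
    congr 3
    funext i
    by_cases h : D i = 0
    · simp [h]
    · field_simp
  · simp only [key]
    congr 3
    funext i
    by_cases h : D i = 0
    · simp [h]
    · field_simp
  · simp only [key, ks]
  · simp only [key, ks]

lemma exists_nullBasis {d : ℕ} (A : Matrix (Fin d) (Fin d) ℝ) :
    ∃ V : Matrix (Fin d) (Fin (d - A.rank)) ℝ, Vᵀ * V = 1 ∧ A * V = 0 := by
  let K := LinearMap.ker (Matrix.toEuclideanLin A)
  have hK : Module.finrank ℝ K = d - A.rank := by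
    have h1 := LinearMap.finrank_range_add_finrank_ker (Matrix.toEuclideanLin A)
    have h2 : A.rank = Module.finrank ℝ (LinearMap.range (Matrix.toEuclideanLin A)) :=
      Matrix.rank_eq_finrank_range_toLin A (EuclideanSpace.basisFun (Fin d) ℝ).toBasis
        (EuclideanSpace.basisFun (Fin d) ℝ).toBasis
    rw [finrank_euclideanSpace_fin] at h1
    change _ + Module.finrank ℝ K = d at h1
    omega
  let b := (stdOrthonormalBasis ℝ K).reindex (finCongr hK)
  refine ⟨Matrix.of fun i j => (b j : EuclideanSpace ℝ (Fin d)) i, ?_, ?_⟩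
  · ext i j
    have := orthonormal_iff_ite.mp b.orthonormal i j
    rw [Submodule.coe_inner, PiLp.inner_apply] at this
    rw [Matrix.one_apply, ← this, Matrix.mul_apply]
    refine Finset.sum_congr rfl fun k _ => ?_
    exact mul_comm _ _
  · ext i j
    have h := (b j).2
    have h' : Matrix.toEuclideanLin A (b j : EuclideanSpace ℝ (Fin d)) = 0 := h
    have := congrArg (fun v : EuclideanSpace ℝ (Fin d) => v i) h'
    exact this

/-- If `(x,Λ)` satisfies 2NC for (NSDP), then any `(x,F,Λ)` with `F ∈ S^d` symmetric and
`C(x) = F²` satisfies 2NC for (SSV-Sym). -/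
theorem statement12 {n d : ℕ} (f : (Fin n → ℝ) → ℝ)
    (C : (Fin n → ℝ) → Matrix (Fin d) (Fin d) ℝ)
    (hf : ContDiff ℝ 2 f)
    (hC : ∀ i j, ContDiff ℝ 2 fun x => C x i j)
    (hCsymm : ∀ x, (C x).IsSymm)
    (x : Fin n → ℝ) (Λ : Matrix (Fin d) (Fin d) ℝ)
    (h2 : NSDP2NC f C x Λ)
    (F : Matrix (Fin d) (Fin d) ℝ) (hFsymm : F.IsSymm) (hF : C x = F * F) :
    SSVSym2NC f C x F Λ := by
  obtain ⟨⟨hΛ, hd, hΛC, -, hΛp⟩, h2⟩ := h2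
  have hFt : Fᵀ = F := hFsymm
  have hΛt : Λᵀ = Λ := hΛ
  have hΛF : Λ * F = 0 := by
    rw [← Matrix.self_mul_conjTranspose_eq_zero, Matrix.conjTranspose_eq_transpose_of_trivial,
      Matrix.transpose_mul, hFt, hΛt]
    calc Λ * F * (F * Λ) = Λ * (F * F) * Λ := by simp only [Matrix.mul_assoc]
      _ = 0 := by rw [← hF, hΛC, Matrix.zero_mul]
  have hFΛ : F * Λ = 0 := by
    have := congrArg Matrix.transpose hΛF
    rwa [Matrix.transpose_mul, hFt, hΛt, Matrix.transpose_zero] at this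
  refine ⟨⟨hΛ, hd, ?_, hF⟩, ?_⟩
  · rw [symProd, hFt, hΛt, hΛF, hFΛ]; simp
  intro z Δ hΔ hDC
  have hΔt : Δᵀ = Δ := hΔ
  have hM : DC C x z = Δ * F + F * Δ := by
    rw [hDC, symProd, hFt, hΔt, smul_smul]; norm_num
  obtain ⟨V, hV, hCV⟩ := exists_nullBasis (C x)
  obtain ⟨P, hPs, hP⟩ := exists_pinv F hFsymm
  have hPt : Pᵀ = P := hPs
  have hFV : F * V = 0 := by
    rw [← Matrix.conjTranspose_mul_self_eq_zero, Matrix.conjTranspose_eq_transpose_of_trivial,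
      Matrix.transpose_mul, hFt]
    calc Vᵀ * F * (F * V) = Vᵀ * (F * F * V) := by simp only [Matrix.mul_assoc]
      _ = 0 := by rw [← hF, hCV, Matrix.mul_zero]
  have hVF : Vᵀ * F = 0 := by
    have := congrArg Matrix.transpose hFV
    rwa [Matrix.transpose_mul, hFt, Matrix.transpose_zero] at this
  have hVM : Vᵀ * DC C x z * V = 0 := by
    rw [hM, Matrix.mul_add, Matrix.add_mul, ← Matrix.mul_assoc Vᵀ F, hVF, Matrix.mul_assoc,
      Matrix.mul_assoc Δ, hFV]
    simp
  have key := h2 V hV hCV P (hF ▸ hP) z hVM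
  have hQ : F * P * F * (F * P * F) = F * P * F := by
    calc F * P * F * (F * P * F) = F * (P * (F * F) * P) * F := by simp only [Matrix.mul_assoc]
      _ = _ := by rw [hP.2.1]
  have hQt : (F * P * F)ᵀ = F * P * F := by
    simp [Matrix.transpose_mul, hFt, hPt, Matrix.mul_assoc]
  have htr : (DC C x z * P * DC C x z * Λ).trace = (Δ * (F * P * F) * Δ * Λ).trace := by
    have e1 : DC C x z * Λ = F * Δ * Λ := by
      rw [hM, Matrix.add_mul, Matrix.mul_assoc Δ, hFΛ]; simp
    have e2 : Λ * DC C x z = Λ * Δ * F := by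
      rw [hM, Matrix.mul_add, ← Matrix.mul_assoc Λ F, hΛF]; simp [Matrix.mul_assoc]
    calc (DC C x z * P * DC C x z * Λ).trace
        = (DC C x z * P * (DC C x z * Λ)).trace := by simp only [Matrix.mul_assoc]
      _ = (DC C x z * (P * (F * Δ)) * Λ).trace := by rw [e1]; simp only [Matrix.mul_assoc]
      _ = (Λ * DC C x z * (P * (F * Δ))).trace := by
          rw [Matrix.trace_mul_comm]; simp only [Matrix.mul_assoc]
      _ = (Λ * (Δ * (F * P * F) * Δ)).trace := by rw [e2]; simp only [Matrix.mul_assoc]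
      _ = _ := by rw [Matrix.trace_mul_comm]
  generalize F * P * F = Q at hQ hQt htr
  have hE : 0 ≤ ((1 - Q) * Δ * Λ * ((1 - Q) * Δ)ᵀ).trace := by
    have := (hΛp.mul_mul_conjTranspose_same ((1 - Q) * Δ)).trace_nonneg
    rwa [Matrix.conjTranspose_eq_transpose_of_trivial] at this
  have hEE : (1 - Q) * (1 - Q) = 1 - Q := by
    rw [Matrix.mul_sub, Matrix.sub_mul, Matrix.sub_mul, hQ]; simp
  have hEq : ((1 - Q) * Δ * Λ * ((1 - Q) * Δ)ᵀ).trace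
      = (Λ * (Δ * Δ)).trace - (Δ * Q * Δ * Λ).trace := by
    rw [Matrix.transpose_mul, Matrix.transpose_sub, hQt, hΔt, Matrix.transpose_one,
      Matrix.trace_mul_comm]
    calc _ = (Δ * ((1 - Q) * (1 - Q)) * Δ * Λ).trace := by simp only [Matrix.mul_assoc]
      _ = _ := by
        rw [hEE, Matrix.mul_sub, Matrix.sub_mul, Matrix.sub_mul, Matrix.trace_sub,
          Matrix.mul_one, Matrix.trace_mul_comm (Δ * Δ)]
  rw [htr] at key
  linarith
end

section
/- If a triple (x,F,Λ) ∈ R^n × S^d × S^d satisfies the second-order necessary conditions (2NC) for problem (SSV-Sym), and in addition F satisfies the eigenvalue condition (EC), then the pair (x,Λ) satisfies the second-order necessary conditions (2NC) for problem (NSDP). -/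
open Matrix

lemma aux_spec {d : ℕ} (F : Matrix (Fin d) (Fin d) ℝ) (hF : F.IsSymm) :
    ∃ (U : Matrix (Fin d) (Fin d) ℝ) (s : Fin d → ℝ), Uᵀ * U = 1 ∧ U * Uᵀ = 1 ∧
      F = U * diagonal s * Uᵀ := by
  have hH : F.IsHermitian := by
    rw [Matrix.IsHermitian, conjTranspose_eq_transpose_of_trivial]; exact hF
  refine ⟨(hH.eigenvectorUnitary : Matrix (Fin d) (Fin d) ℝ), hH.eigenvalues, ?_, ?_, ?_⟩
  · have := (Matrix.mem_unitaryGroup_iff').1 hH.eigenvectorUnitary.2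
    rwa [star_eq_conjTranspose, conjTranspose_eq_transpose_of_trivial] at this
  · have := (Matrix.mem_unitaryGroup_iff).1 hH.eigenvectorUnitary.2
    rwa [star_eq_conjTranspose, conjTranspose_eq_transpose_of_trivial] at this
  · have := hH.spectral_theorem
    rw [Unitary.conjStarAlgAut_apply, star_eq_conjTranspose,
      conjTranspose_eq_transpose_of_trivial] at this
    simpa using this

lemma aux_eig {d : ℕ} {F U : Matrix (Fin d) (Fin d) ℝ} {s : Fin d → ℝ}
    (h1 : Uᵀ * U = 1) (hF : F = U * diagonal s * Uᵀ) (i : Fin d) : IsEigOf F (s i) := by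
  refine ⟨U *ᵥ (Pi.single i 1), ?_, ?_⟩
  · intro h
    have h' : Uᵀ *ᵥ (U *ᵥ (Pi.single i (1:ℝ))) = 0 := by rw [h, mulVec_zero]
    rw [mulVec_mulVec, h1, one_mulVec] at h'
    have := congrFun h' i
    simp at this
  · rw [hF, mulVec_mulVec, Matrix.mul_assoc, h1, Matrix.mul_one, ← mulVec_mulVec]
    rw [diagonal_mulVec_single, mul_one, ← mulVec_smul]
    congr 1
    ext j
    simp [Pi.single_apply]

lemma aux_sum {d : ℕ} {F U : Matrix (Fin d) (Fin d) ℝ} {s : Fin d → ℝ}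
    (h1 : Uᵀ * U = 1) (hF : F = U * diagonal s * Uᵀ) (hEC : EigCond F) (i j : Fin d)
    (h : s i + s j = 0) : s i = 0 ∧ s j = 0 := by
  by_contra hc
  by_cases hi : s i = 0
  · apply hc; refine ⟨hi, by linarith⟩
  · exact hEC _ _ (aux_eig h1 hF i) (aux_eig h1 hF j) hi (fun hj => hi (by linarith)) h

lemma aux_comm {d : ℕ} {F Λ : Matrix (Fin d) (Fin d) ℝ} (hFs : F.IsSymm) (hEC : EigCond F)
    (h : Λ * F + F * Λ = 0) : Λ * F = 0 := by
  obtain ⟨U, s, h1, h2, hF⟩ := aux_spec F hFs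
  have hL : Λ = U * (Uᵀ * Λ * U) * Uᵀ := by
    calc Λ = (U * Uᵀ) * Λ * (U * Uᵀ) := by rw [h2]; simp
      _ = _ := by simp only [Matrix.mul_assoc]
  have hFU : F * U = U * diagonal s := by
    rw [hF, Matrix.mul_assoc, h1, Matrix.mul_one]
  have hUF : Uᵀ * F = diagonal s * Uᵀ := by
    rw [hF, ← Matrix.mul_assoc, ← Matrix.mul_assoc, h1, Matrix.one_mul]
  have h3 : (Uᵀ * Λ * U) * diagonal s + diagonal s * (Uᵀ * Λ * U) = 0 := by
    calc _ = Uᵀ * (Λ * F + F * Λ) * U := by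
          rw [Matrix.mul_add, Matrix.add_mul]
          congr 1
          · simp only [Matrix.mul_assoc, hFU]
          · simp only [← Matrix.mul_assoc, hUF]
      _ = 0 := by rw [h]; simp
  have h4 : (Uᵀ * Λ * U) * diagonal s = 0 := by
    ext i j
    have := congrFun (congrFun h3 i) j
    rw [Matrix.add_apply, mul_diagonal, diagonal_mul] at this
    rw [mul_diagonal]
    simp only [Matrix.zero_apply] at this ⊢
    by_cases hs : s i + s j = 0
    · rw [(aux_sum h1 hF hEC i j hs).2, mul_zero]
    · have : (Uᵀ * Λ * U) i j * (s i + s j) = 0 := by linarith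
      rcases mul_eq_zero.1 this with h | h
      · rw [h, zero_mul]
      · exact absurd h hs
  calc Λ * F = U * ((Uᵀ * Λ * U) * diagonal s) * Uᵀ := by
        conv_lhs => rw [hL, hF]
        calc U * (Uᵀ * Λ * U) * Uᵀ * (U * diagonal s * Uᵀ)
            = U * (Uᵀ * Λ * U) * (Uᵀ * U) * diagonal s * Uᵀ := by
              simp only [Matrix.mul_assoc]
          _ = _ := by rw [h1, Matrix.mul_one]; simp only [Matrix.mul_assoc]
    _ = 0 := by rw [h4]; simp

/-- pseudo-inverse of a symmetric matrix -/
lemma aux_pinv {d : ℕ} (F : Matrix (Fin d) (Fin d) ℝ) (hFs : F.IsSymm) :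
    ∃ S : Matrix (Fin d) (Fin d) ℝ, S.IsSymm ∧ F * S = S * F ∧ F * S * F = F := by
  obtain ⟨U, s, h1, h2, hF⟩ := aux_spec F hFs
  have key : ∀ a b : Fin d → ℝ, (U * diagonal a * Uᵀ) * (U * diagonal b * Uᵀ) =
      U * diagonal (fun i => a i * b i) * Uᵀ := by
    intro a b
    rw [← diagonal_mul_diagonal]
    calc _ = U * diagonal a * (Uᵀ * U) * diagonal b * Uᵀ := by simp only [Matrix.mul_assoc]
      _ = _ := by rw [h1, Matrix.mul_one]; simp only [Matrix.mul_assoc]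
  refine ⟨U * diagonal (fun i => (s i)⁻¹) * Uᵀ, ?_, ?_, ?_⟩
  · simp [Matrix.IsSymm, Matrix.transpose_mul, Matrix.mul_assoc]
  · rw [hF, key, key]; simp only [mul_comm]
  · rw [hF, key, key]
    congr; ext i
    by_cases h : s i = 0 <;> simp [h]

lemma aux_lyap {d : ℕ} {F A Q : Matrix (Fin d) (Fin d) ℝ} (hFs : F.IsSymm) (hEC : EigCond F)
    (hA : A.IsSymm) (hQF : ∀ v, F *ᵥ v = 0 → Q *ᵥ v = v) (hQs : Q.IsSymm)
    (hQA : Q * A * Q = 0) :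
    ∃ Δ : Matrix (Fin d) (Fin d) ℝ, Δ.IsSymm ∧ Δ * F + F * Δ = A := by
  obtain ⟨U, s, h1, h2, hF⟩ := aux_spec F hFs
  have hFU : F * U = U * diagonal s := by
    rw [hF, Matrix.mul_assoc, h1, Matrix.mul_one]
  have hUF : Uᵀ * F = diagonal s * Uᵀ := by
    rw [hF, ← Matrix.mul_assoc, ← Matrix.mul_assoc, h1, Matrix.one_mul]
  have hQU : ∀ i, s i = 0 → Q *ᵥ (U *ᵥ Pi.single i (1:ℝ)) = U *ᵥ Pi.single i (1:ℝ) := by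
    intro i hi
    apply hQF
    rw [mulVec_mulVec, hFU, ← mulVec_mulVec, diagonal_mulVec_single, hi]
    simp
  set B := Uᵀ * A * U with hB
  have hBs : ∀ i j, B i j = B j i := by
    intro i j
    have : Bᵀ = B := by
      rw [hB, Matrix.transpose_mul, Matrix.transpose_mul, hA.eq, transpose_transpose,
        Matrix.mul_assoc]
    conv_lhs => rw [← this]
    rfl
  have hAB : A = U * B * Uᵀ := by
    calc A = (U * Uᵀ) * A * (U * Uᵀ) := by rw [h2]; simp
      _ = _ := by simp only [hB, Matrix.mul_assoc]
  have hB0 : ∀ i j, s i = 0 → s j = 0 → B i j = 0 := by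
    intro i j hi hj
    have e : B i j = (U *ᵥ Pi.single i (1:ℝ)) ⬝ᵥ (A *ᵥ (U *ᵥ Pi.single j (1:ℝ))) := by
      rw [Matrix.dotProduct_mulVec, ← Matrix.vecMul_transpose, Matrix.vecMul_vecMul,
        Matrix.dotProduct_mulVec, Matrix.vecMul_vecMul, ← hB]
      simp
    rw [e, ← hQU i hi, ← hQU j hj]
    generalize U *ᵥ Pi.single i (1:ℝ) = u
    generalize U *ᵥ Pi.single j (1:ℝ) = v
    rw [Matrix.dotProduct_mulVec, ← Matrix.vecMul_transpose, Matrix.vecMul_vecMul,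
        Matrix.dotProduct_mulVec, Matrix.vecMul_vecMul, hQs.eq, hQA]
    simp
  let E : Matrix (Fin d) (Fin d) ℝ := Matrix.of fun i j => B i j / (s i + s j)
  have hE : E * diagonal s + diagonal s * E = B := by
    ext i j
    rw [Matrix.add_apply, mul_diagonal, diagonal_mul]
    simp only [E, of_apply]
    by_cases hs : s i + s j = 0
    · obtain ⟨hi, hj⟩ := aux_sum h1 hF hEC i j hs
      rw [hB0 i j hi hj]; simp
    · field_simp
      ring
  refine ⟨U * E * Uᵀ, ?_, ?_⟩
  · have : Eᵀ = E := by
      ext i j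
      simp only [E, transpose_apply, of_apply]
      rw [hBs, add_comm]
    rw [Matrix.IsSymm, Matrix.transpose_mul, Matrix.transpose_mul, this, transpose_transpose,
        Matrix.mul_assoc]
  · rw [hAB, ← hE, Matrix.mul_add, Matrix.add_mul]
    congr 1
    · simp only [Matrix.mul_assoc, hUF]
    · simp only [← Matrix.mul_assoc, hFU]

lemma aux_ker {d m : ℕ} {X Q : Matrix (Fin d) (Fin d) ℝ} {V : Matrix (Fin d) (Fin m) ℝ}
    (hm : m = d - X.rank) (hV : Vᵀ * V = 1) (hXV : X * V = 0) (hXQ : X * Q = 0) :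
    ∃ W : Matrix (Fin m) (Fin d) ℝ, Q = V * W := by
  have hle : LinearMap.range V.mulVecLin ≤ LinearMap.ker X.mulVecLin := by
    rintro _ ⟨w, rfl⟩
    simp [hXV]
  have hinj : Function.Injective V.mulVecLin := by
    intro a b hab
    have : Vᵀ *ᵥ (V *ᵥ a) = Vᵀ *ᵥ (V *ᵥ b) := by
      rw [show V *ᵥ a = V *ᵥ b from hab]
    simpa [mulVec_mulVec, hV] using this
  have hr1 : Module.finrank ℝ (LinearMap.range V.mulVecLin) = m := by
    rw [LinearMap.finrank_range_of_inj hinj]; simp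
  have hr2 := LinearMap.finrank_range_add_finrank_ker X.mulVecLin
  have heq : LinearMap.range V.mulVecLin = LinearMap.ker X.mulVecLin := by
    apply Submodule.eq_of_le_of_finrank_eq hle
    have : X.rank = Module.finrank ℝ (LinearMap.range X.mulVecLin) := rfl
    rw [hr1]
    simp at hr2
    omega
  have hcol : ∀ j, ∃ w, V *ᵥ w = Q *ᵥ Pi.single j (1:ℝ) := by
    intro j
    have : Q *ᵥ Pi.single j (1:ℝ) ∈ LinearMap.range V.mulVecLin := by
      rw [heq]; simp [mulVec_mulVec, hXQ, -mulVec_single]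
    exact this
  choose w hw using hcol
  refine ⟨Matrix.of fun i j => w j i, ?_⟩
  ext i j
  have := congrFun (hw j) i
  simp at this
  rw [← this]
  rfl

/-- If `(x,F,Λ)` satisfies 2NC for (SSV-Sym) and `F` satisfies the eigenvalue
condition (EC), then `(x,Λ)` satisfies 2NC for (NSDP). -/
theorem statement13 {n d : ℕ} (f : (Fin n → ℝ) → ℝ)
    (C : (Fin n → ℝ) → Matrix (Fin d) (Fin d) ℝ)
    (hf : ContDiff ℝ 2 f)
    (hC : ∀ i j, ContDiff ℝ 2 fun x => C x i j)
    (hCsymm : ∀ x, (C x).IsSymm)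
    (x : Fin n → ℝ) (F Λ : Matrix (Fin d) (Fin d) ℝ) (hFsymm : F.IsSymm)
    (h2 : SSVSym2NC f C x F Λ) (hEC : EigCond F) :
    NSDP2NC f C x Λ := by
  obtain ⟨⟨hΛ, hgrad, hsym, hCF⟩, hso⟩ := h2
  have hac : Λ * F + F * Λ = 0 := by
    unfold symProd at hsym
    rw [hFsymm.eq, hΛ.eq] at hsym
    exact (smul_eq_zero.1 hsym).resolve_left (by norm_num)
  have hΛF : Λ * F = 0 := aux_comm hFsymm hEC hac
  obtain ⟨S, hSs, hFS, hFSF⟩ := aux_pinv F hFsymm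
  obtain ⟨Q, hQ⟩ : ∃ Q, Q = 1 - F * S := ⟨_, rfl⟩
  have hFQ : F * Q = 0 := by
    rw [hQ, hFS, Matrix.mul_sub, ← Matrix.mul_assoc, hFSF]; simp
  have hQF : Q * F = 0 := by
    rw [hQ, Matrix.sub_mul, hFSF]; simp
  have hQs : Q.IsSymm := by
    rw [Matrix.IsSymm, hQ, transpose_sub, transpose_mul, hSs.eq, hFsymm.eq, hFS]; simp
  have hΛQ : Λ * Q = Λ := by
    rw [hQ, Matrix.mul_sub, ← Matrix.mul_assoc, hΛF]; simp
  have hFΛ : F * Λ = 0 := by rw [hΛF, zero_add] at hac; exact hac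
  have hQΛ : Q * Λ = Λ := by
    rw [hQ, hFS, Matrix.sub_mul, Matrix.mul_assoc, hFΛ]; simp
  have hkerv : ∀ v : Fin d → ℝ, F *ᵥ v = 0 → 0 ≤ v ⬝ᵥ (Λ *ᵥ v) := by
    intro v hv
    have hvF : v ᵥ* F = 0 := by rw [← hFsymm.eq, vecMul_transpose, hv]
    have h := hso 0 (vecMulVec v v) (by simp [Matrix.IsSymm, transpose_vecMulVec]) (by
      rw [symProd, transpose_vecMulVec, hFsymm.eq, vecMulVec_mul, mul_vecMulVec, hv, hvF]
      ext i j
      simp [DC])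
    have e1 : D2f f x 0 = 0 := by simp [D2f, iteratedDeriv_const]
    have e2 : D2C C x 0 = 0 := by ext i j; simp [D2C, iteratedDeriv_const]
    have e3 : (Λ * (vecMulVec v v * vecMulVec v v)).trace = (v ⬝ᵥ v) * (v ⬝ᵥ (Λ *ᵥ v)) := by
      rw [vecMulVec_mul_vecMulVec, mul_vecMulVec, trace_vecMulVec, dotProduct_smul,
        dotProduct_comm (Λ *ᵥ v), smul_eq_mul]
    rw [e1, e2, e3] at h
    simp only [Matrix.mul_zero, trace_zero, sub_zero, zero_add] at h
    by_cases hv0 : v = 0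
    · simp [hv0]
    · have hpos : 0 < v ⬝ᵥ v := by
        have h0 : 0 ≤ v ⬝ᵥ v := Finset.sum_nonneg fun i _ => mul_self_nonneg _
        exact lt_of_le_of_ne h0 (fun h => hv0 (dotProduct_self_eq_zero.1 h.symm))
      by_contra hneg
      push Not at hneg
      nlinarith [mul_neg_of_pos_of_neg hpos hneg]
  refine ⟨⟨hΛ, hgrad, ?_, ?_, ?_⟩, ?_⟩
  · rw [hCF, ← Matrix.mul_assoc, hΛF, Matrix.zero_mul]
  · rw [hCF]
    have := posSemidef_conjTranspose_mul_self F
    rwa [conjTranspose_eq_transpose_of_trivial, hFsymm.eq] at this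
  · refine PosSemidef.of_dotProduct_mulVec_nonneg ?_ ?_
    · rw [Matrix.IsHermitian, conjTranspose_eq_transpose_of_trivial]; exact hΛ
    · intro v
      have := hkerv (Q *ᵥ v) (by rw [mulVec_mulVec, hFQ, zero_mulVec])
      rw [mulVec_mulVec, hΛQ, ← vecMul_transpose, hQs.eq, ← Matrix.dotProduct_mulVec,
        mulVec_mulVec, hQΛ] at this
      simpa using this
  · intro V hV hCV P hP z hz
    have hA : (DC C x z).IsSymm := by
      ext i j
      simp only [DC, transpose_apply, of_apply]
      congr 1
      ext t
      exact (hCsymm _).apply i j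
    generalize hAeq : DC C x z = A at *
    obtain ⟨W, hW⟩ := aux_ker (Q := Q) rfl hV hCV (by
      rw [hCF, Matrix.mul_assoc, hFQ, Matrix.mul_zero])
    have hQA : Q * A * Q = 0 := by
      calc Q * A * Q = Qᵀ * A * Q := by rw [hQs.eq]
        _ = Wᵀ * (Vᵀ * A * V) * W := by
          rw [hW, transpose_mul]; simp only [Matrix.mul_assoc]
        _ = 0 := by rw [hz]; simp
    obtain ⟨Δ₀, hΔ₀s, hΔ₀⟩ := aux_lyap hFsymm hEC hA (Q := Q) (by
      intro v hv
      rw [hQ, hFS, sub_mulVec, ← mulVec_mulVec, hv]; simp) hQs hQA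
    have hQQ : Q * Q = Q := by
      calc Q * Q = (1 - S * F) * Q := by rw [hQ, hFS]
        _ = Q := by rw [Matrix.sub_mul, Matrix.mul_assoc, hFQ]; simp
    obtain ⟨Δ, hΔs, hΔ, hQΔ⟩ : ∃ Δ : Matrix (Fin d) (Fin d) ℝ, Δ.IsSymm ∧
        Δ * F + F * Δ = A ∧ Q * Δ * Q = 0 := by
      refine ⟨Δ₀ - Q * Δ₀ * Q, ?_, ?_, ?_⟩
      · rw [Matrix.IsSymm, transpose_sub, transpose_mul, transpose_mul, hΔ₀s.eq, hQs.eq,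
          Matrix.mul_assoc]
      · rw [Matrix.sub_mul, Matrix.mul_sub F, Matrix.mul_assoc (Q * Δ₀), hQF, ← Matrix.mul_assoc F,
          ← Matrix.mul_assoc F, hFQ]
        simpa using hΔ₀
      · have : Q * (Q * Δ₀ * Q) * Q = (Q * Q) * Δ₀ * (Q * Q) := by simp only [Matrix.mul_assoc]
        rw [Matrix.mul_sub, Matrix.sub_mul, this, hQQ, sub_self]
    have hmain := hso z Δ hΔs (by
      rw [hAeq, symProd, hFsymm.eq, hΔs.eq, hΔ, smul_smul]; norm_num)
    have hΛA : Λ * A = Λ * Δ * F := by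
      rw [← hΔ, Matrix.mul_add, ← Matrix.mul_assoc Λ F, hΛF]; simp [Matrix.mul_assoc]
    have hAΛ : A * Λ = F * Δ * Λ := by
      rw [← hΔ, Matrix.add_mul, Matrix.mul_assoc Δ, hFΛ]; simp
    have hSF : S * F = 1 - Q := by rw [hQ, hFS]; simp
    have hFS' : F * S = 1 - Q := by rw [hQ]; simp
    have hG : F * P * F = 1 - Q := by
      have h1 : F * (F * P * F) * F = F * F := by
        have := hP.1
        rw [hCF] at this
        simpa only [Matrix.mul_assoc] using this
      calc F * P * F = (F * S * F) * P * (F * S * F) := by rw [hFSF]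
        _ = (S * F * F) * P * (F * (F * S)) := by 
            rw [hFS, ← hFS, ← Matrix.mul_assoc F F S, Matrix.mul_assoc F S F, ← hFS,
              ← Matrix.mul_assoc F F S]
        _ = S * (F * (F * P * F) * F) * S := by simp only [Matrix.mul_assoc]
        _ = (S * F) * (F * S) := by rw [h1]; simp only [Matrix.mul_assoc]
        _ = 1 - Q := by
          rw [hSF, hFS', Matrix.sub_mul, Matrix.mul_sub Q, hQQ]; simp
    have hΛΔQ : Λ * Δ * Q = 0 := by
      calc Λ * Δ * Q = Λ * (Q * Δ * Q) := by
            conv_lhs => rw [← hΛQ]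
            simp only [Matrix.mul_assoc]
        _ = 0 := by rw [hQΔ, Matrix.mul_zero]
    have htr : (A * P * A * Λ).trace = (Λ * (Δ * Δ)).trace := by
      calc (A * P * A * Λ).trace = (A * P * (F * Δ * Λ)).trace := by
            rw [Matrix.mul_assoc (A * P), hAΛ]
        _ = (Λ * (A * P * (F * Δ))).trace := by
            rw [trace_mul_comm Λ]; simp only [Matrix.mul_assoc]
        _ = (Λ * A * (P * (F * Δ))).trace := by simp only [Matrix.mul_assoc]
        _ = (Λ * Δ * (F * P * F) * Δ).trace := by rw [hΛA]; simp only [Matrix.mul_assoc]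
        _ = _ := by
          rw [hG, Matrix.mul_sub, hΛΔQ]; simp [Matrix.mul_assoc]
    rw [htr]
    linarith
end

section
/- If F ∈ S^d is a local minimizer of problem (DSS-Sym) and F satisfies the eigenvalue condition (EC), then X = F² is a local minimizer of problem (BC). Moreover, if F is a strict local minimizer of (DSS-Sym), then X = F² is a strict local minimizer of (BC). -/
open Matrix

/-- The Frobenius norm of a matrix. -/
noncomputable def frob {d : ℕ} (A : Matrix (Fin d) (Fin d) ℝ) : ℝ :=
  Real.sqrt (∑ i, ∑ j, (A i j) ^ 2)

/-- `X` is a local minimizer of (BC): `X ⪰ 0` and `h(X') ≥ h(X)` for all `X' ⪰ 0` close to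
`X` in Frobenius norm. -/
noncomputable def BCLocalMin {d : ℕ} (h : Matrix (Fin d) (Fin d) ℝ → ℝ)
    (X : Matrix (Fin d) (Fin d) ℝ) : Prop :=
  X.PosSemidef ∧ ∃ ε > (0 : ℝ), ∀ X' : Matrix (Fin d) (Fin d) ℝ,
    X'.PosSemidef → frob (X' - X) ≤ ε → h X ≤ h X'

/-- `X` is a strict local minimizer of (BC). -/
noncomputable def BCStrictLocalMin {d : ℕ} (h : Matrix (Fin d) (Fin d) ℝ → ℝ)
    (X : Matrix (Fin d) (Fin d) ℝ) : Prop :=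
  X.PosSemidef ∧ ∃ ε > (0 : ℝ), ∀ X' : Matrix (Fin d) (Fin d) ℝ,
    X'.PosSemidef → frob (X' - X) ≤ ε → X' ≠ X → h X < h X'

/-- `F ∈ S^d` is a local minimizer of (DSS-Sym): `g(G) = h(G²) ≥ h(F²) = g(F)` for all
symmetric `G` close to `F` in Frobenius norm. -/
noncomputable def DSSSymLocalMin {d : ℕ} (h : Matrix (Fin d) (Fin d) ℝ → ℝ)
    (F : Matrix (Fin d) (Fin d) ℝ) : Prop :=
  ∃ ε > (0 : ℝ), ∀ G : Matrix (Fin d) (Fin d) ℝ,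
    G.IsSymm → frob (G - F) ≤ ε → h (F * F) ≤ h (G * G)

/-- `F ∈ S^d` is a strict local minimizer of (DSS-Sym). -/
noncomputable def DSSSymStrictLocalMin {d : ℕ} (h : Matrix (Fin d) (Fin d) ℝ → ℝ)
    (F : Matrix (Fin d) (Fin d) ℝ) : Prop :=
  ∃ ε > (0 : ℝ), ∀ G : Matrix (Fin d) (Fin d) ℝ,
    G.IsSymm → frob (G - F) ≤ ε → G ≠ F → h (F * F) < h (G * G)

/-- Symmetric matrix: eigenvectors of the square are eigenvectors, under (EC). -/
lemma eig_of_sq {d : ℕ} (F : Matrix (Fin d) (Fin d) ℝ) (hF : F.IsSymm) (hE : EigCond F)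
    (v : Fin d → ℝ) (c : ℝ) (hv : (F * F).mulVec v = (c * c) • v) :
    ∃ s : ℝ, s * s = 1 ∧ F.mulVec v = (s * c) • v := by
  rw [← Matrix.mulVec_mulVec] at hv
  by_cases hc : c = 0
  · subst hc
    refine ⟨1, by norm_num, ?_⟩
    simp only [mul_zero, zero_smul] at hv ⊢
    have h1 : (F.mulVec v) ⬝ᵥ (F.mulVec v) = 0 := by
      nth_rewrite 1 [← hF]
      rw [Matrix.mulVec_transpose, ← Matrix.dotProduct_mulVec, hv, dotProduct_zero]
    exact dotProduct_self_eq_zero.mp h1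
  · by_cases h1 : F.mulVec v + c • v = 0
    · refine ⟨-1, by norm_num, ?_⟩
      rw [eq_neg_of_add_eq_zero_left h1]; simp
    by_cases h2 : F.mulVec v - c • v = 0
    · refine ⟨1, by norm_num, ?_⟩
      rw [sub_eq_zero.mp h2]; simp
    exfalso
    refine hE c (-c) ⟨_, h1, ?_⟩ ⟨_, h2, ?_⟩ hc (neg_ne_zero.mpr hc) (by ring)
    · rw [Matrix.mulVec_add, hv, Matrix.mulVec_smul]
      ext i; simp; ring
    · rw [Matrix.mulVec_sub, hv, Matrix.mulVec_smul]
      ext i; simp; ring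

lemma exists_diag {d : ℕ} (X : Matrix (Fin d) (Fin d) ℝ) (hX : X.PosSemidef) :
    ∃ (U : Matrix (Fin d) (Fin d) ℝ) (D : Fin d → ℝ), Uᵀ * U = 1 ∧ (∀ i, 0 ≤ D i) ∧
      X = U * diagonal D * Uᵀ := by
  refine ⟨hX.1.eigenvectorUnitary, hX.1.eigenvalues, ?_, hX.eigenvalues_nonneg, ?_⟩
  · exact (Matrix.mem_unitaryGroup_iff'.mp hX.1.eigenvectorUnitary.2)
  · have := hX.1.spectral_theorem
    rw [Unitary.conjStarAlgAut_apply] at this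
    exact this

lemma isCompact_orth (d : ℕ) :
    IsCompact {U : Matrix (Fin d) (Fin d) ℝ | Uᵀ * U = 1} := by
  have hK : IsCompact (Set.univ.pi fun _ : Fin d => Set.univ.pi fun _ : Fin d =>
      Set.Icc (-1 : ℝ) 1) :=
    isCompact_univ_pi fun _ => isCompact_univ_pi fun _ => isCompact_Icc
  refine hK.of_isClosed_subset ?_ ?_
  · exact isClosed_eq (by fun_prop) continuous_const
  · intro (U : Matrix (Fin d) (Fin d) ℝ) (hU : Uᵀ * U = 1) i _ j _
    have h1 : ∑ k, U k j * U k j = 1 := by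
      have := congrFun (congrFun hU j) j
      rw [Matrix.mul_apply, Matrix.one_apply_eq] at this
      exact this
    have h2 : U i j * U i j ≤ 1 := by
      rw [← h1]
      exact Finset.single_le_sum (f := fun k => U k j * U k j)
        (fun k _ => mul_self_nonneg _) (Finset.mem_univ i)
    constructor <;> nlinarith

lemma abs_le_frob {d : ℕ} (A : Matrix (Fin d) (Fin d) ℝ) (i j : Fin d) : |A i j| ≤ frob A := by
  unfold frob
  apply Real.abs_le_sqrt
  calc A i j ^ 2 ≤ ∑ j, A i j ^ 2 :=
        Finset.single_le_sum (f := fun j => A i j ^ 2) (fun k _ => sq_nonneg _) (Finset.mem_univ j)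
    _ ≤ _ := Finset.single_le_sum (f := fun i => ∑ j, A i j ^ 2)
        (fun k _ => Finset.sum_nonneg fun _ _ => sq_nonneg _) (Finset.mem_univ i)

lemma continuous_frob (d : ℕ) : Continuous (frob : Matrix (Fin d) (Fin d) ℝ → ℝ) := by
  unfold frob
  fun_prop

lemma frob_zero (d : ℕ) : frob (0 : Matrix (Fin d) (Fin d) ℝ) = 0 := by
  simp [frob]

/-- Local openness of squaring under (EC). -/
lemma key {d : ℕ} (F : Matrix (Fin d) (Fin d) ℝ) (hF : F.IsSymm) (hE : EigCond F)
    (ε : ℝ) (hε : 0 < ε) : ∃ δ > (0 : ℝ), ∀ X : Matrix (Fin d) (Fin d) ℝ, X.PosSemidef →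
      frob (X - F * F) ≤ δ → ∃ G : Matrix (Fin d) (Fin d) ℝ, G.IsSymm ∧ frob (G - F) ≤ ε ∧
        G * G = X := by
  by_contra hcon
  push Not at hcon
  choose X hX hXd hXG using fun n : ℕ => hcon (1 / ((n : ℝ) + 1)) (by positivity)
  have hXlim : Filter.Tendsto X Filter.atTop (nhds (F * F)) := by
    refine tendsto_pi_nhds.mpr fun i => ?_
    refine tendsto_pi_nhds.mpr fun j => ?_
    rw [tendsto_iff_dist_tendsto_zero]
    refine squeeze_zero (fun _ => dist_nonneg) (fun n => ?_)
      (tendsto_one_div_add_atTop_nhds_zero_nat (𝕜 := ℝ))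
    exact (abs_le_frob (X n - F * F) i j).trans (hXd n)
  choose U D hU hD hXe using fun n => exists_diag (X n) (hX n)
  have : FirstCountableTopology (Matrix (Fin d) (Fin d) ℝ) :=
    inferInstanceAs (FirstCountableTopology (Fin d → Fin d → ℝ))
  obtain ⟨V, hV, φ, hφ, hVlim⟩ := (isCompact_orth d).tendsto_subseq hU
  have hV' : V * Vᵀ = 1 := mul_eq_one_comm.mp hV
  have hXlim' := hXlim.comp hφ.tendsto_atTop
  have hDX : ∀ n, diagonal (D n) = (U n)ᵀ * X n * U n := by
    intro n
    rw [hXe n]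
    simp only [Matrix.mul_assoc, hU n, Matrix.mul_one]
    rw [← Matrix.mul_assoc, hU n, Matrix.one_mul]
  have hDlim : Filter.Tendsto (fun n => diagonal (D (φ n))) Filter.atTop
      (nhds (Vᵀ * (F * F) * V)) := by
    simp only [hDX]
    have hc : Continuous (fun p : Matrix (Fin d) (Fin d) ℝ × Matrix (Fin d) (Fin d) ℝ =>
      p.1ᵀ * p.2 * p.1) := by fun_prop
    have hp : Filter.Tendsto (fun n => (U (φ n), X (φ n))) Filter.atTop (nhds (V, F * F)) :=
      hVlim.prodMk_nhds hXlim'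
    have hq := (hc.tendsto (V, F * F)).comp hp
    simp only [Function.comp_def] at hq
    exact hq
  set M := Vᵀ * (F * F) * V with hM
  have hent : ∀ i j, Filter.Tendsto (fun n => diagonal (D (φ n)) i j) Filter.atTop
      (nhds (M i j)) := fun i j => (tendsto_pi_nhds.mp (tendsto_pi_nhds.mp hDlim i) j)
  have hDi : ∀ i, Filter.Tendsto (fun n => D (φ n) i) Filter.atTop (nhds (M i i)) := by
    intro i; simpa using hent i i
  have hMd : M = diagonal (fun i => M i i) := by
    ext i j
    by_cases hij : i = j
    · subst hij; simp
    · rw [diagonal_apply_ne _ hij]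
      refine tendsto_nhds_unique (hent i j) ?_
      simp [diagonal_apply_ne _ hij]
  have hM0 : ∀ i, 0 ≤ M i i := fun i => ge_of_tendsto' (hDi i) (fun n => hD _ _)
  have hFV : (F * F) * V = V * diagonal (fun i => M i i) := by
    rw [← hMd, hM, ← Matrix.mul_assoc V, ← Matrix.mul_assoc V, hV', Matrix.one_mul]
  have hs : ∀ i, ∃ s : ℝ, s * s = 1 ∧ F.mulVec (fun k => V k i) =
      (s * √(M i i)) • (fun k => V k i) := by
    intro i
    refine eig_of_sq F hF hE _ _ ?_
    rw [Real.mul_self_sqrt (hM0 i)]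
    ext k
    have := congrFun (congrFun hFV k) i
    rw [Matrix.mul_diagonal] at this
    simp only [Pi.smul_apply, smul_eq_mul]
    rw [mul_comm, ← this]
    rfl
  choose s hs1 hs2 using hs
  have hFV2 : F * V = V * diagonal (fun i => s i * √(M i i)) := by
    ext k i
    rw [Matrix.mul_diagonal]
    have := congrFun (hs2 i) k
    simp only [Pi.smul_apply, smul_eq_mul] at this
    rw [mul_comm, ← this]
    rfl
  have hFe : F = V * diagonal (fun i => s i * √(M i i)) * Vᵀ := by
    rw [← hFV2, Matrix.mul_assoc, hV', Matrix.mul_one]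
  let G : ℕ → Matrix (Fin d) (Fin d) ℝ := fun n =>
    U n * diagonal (fun i => s i * √(D n i)) * (U n)ᵀ
  have hGlim : Filter.Tendsto (fun n => G (φ n)) Filter.atTop (nhds F) := by
    have hdl : Filter.Tendsto (fun n => (fun i => s i * √(D (φ n) i))) Filter.atTop
        (nhds (fun i => s i * √(M i i))) := by
      rw [tendsto_pi_nhds]; intro i
      exact ((Real.continuous_sqrt.tendsto _).comp (hDi i)).const_mul (s i)
    have hc : Continuous (fun p : Matrix (Fin d) (Fin d) ℝ × (Fin d → ℝ) =>
      p.1 * diagonal p.2 * p.1ᵀ) := by fun_prop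
    have hp : Filter.Tendsto (fun n => (U (φ n), (fun i => s i * √(D (φ n) i)))) Filter.atTop
        (nhds (V, (fun i => s i * √(M i i)))) := hVlim.prodMk_nhds hdl
    have hq := (hc.tendsto (V, (fun i => s i * √(M i i)))).comp hp
    simp only [Function.comp_def] at hq
    rw [← hFe] at hq
    exact hq
  have hGs : ∀ n, (G n).IsSymm := by
    intro n
    simp [G, Matrix.IsSymm, Matrix.mul_assoc]
  have hGG : ∀ n, G n * G n = X n := by
    intro n
    have : G n * G n = U n * (diagonal (fun i => s i * √(D n i)) * ((U n)ᵀ * U n) *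
        diagonal (fun i => s i * √(D n i))) * (U n)ᵀ := by
      simp only [G, Matrix.mul_assoc]
    rw [this, hU n, Matrix.mul_one, diagonal_mul_diagonal]
    conv_rhs => rw [hXe n]
    congr 3
    ext i
    have h1 := hs1 i
    have h2 := Real.mul_self_sqrt (hD n i)
    calc _ = (s i * s i) * (√(D n i) * √(D n i)) := by ring
      _ = _ := by rw [h1, h2, one_mul]
  have hfl : Filter.Tendsto (fun n => frob (G (φ n) - F)) Filter.atTop (nhds 0) := by
    have h1 : Filter.Tendsto (fun n => G (φ n) - F) Filter.atTop (nhds (F - F)) :=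
      hGlim.sub_const F
    rw [sub_self] at h1
    have := ((continuous_frob d).tendsto 0).comp h1
    rw [frob_zero] at this
    exact this
  obtain ⟨n, hn⟩ := (hfl.eventually_lt_const hε).exists
  exact hXG (φ n) (G (φ n)) (hGs _) hn.le (hGG _)

lemma exists_unit {d : ℕ} (F : Matrix (Fin d) (Fin d) ℝ) (a : ℝ) (h : IsEigOf F a) :
    ∃ v : Fin d → ℝ, v ⬝ᵥ v = 1 ∧ F.mulVec v = a • v := by
  obtain ⟨v, hv, hF⟩ := h
  have h0 : 0 < v ⬝ᵥ v :=
    lt_of_le_of_ne (Finset.sum_nonneg fun i _ => mul_self_nonneg _)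
      (fun h => hv (dotProduct_self_eq_zero.mp h.symm))
  refine ⟨(√(v ⬝ᵥ v))⁻¹ • v, ?_, ?_⟩
  · rw [smul_dotProduct, dotProduct_smul, smul_eq_mul, smul_eq_mul, ← mul_assoc, ← mul_inv,
      Real.mul_self_sqrt h0.le, inv_mul_cancel₀ h0.ne']
  · rw [Matrix.mulVec_smul, hF, smul_comm]

/-- Strictness forces (EC). -/
lemma strict_ec {d : ℕ} (h : Matrix (Fin d) (Fin d) ℝ → ℝ) (F : Matrix (Fin d) (Fin d) ℝ)
    (hF : F.IsSymm) (hs : DSSSymStrictLocalMin h F) : EigCond F := by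
  intro a b ha hb ha0 hb0 hab
  obtain rfl : b = -a := by linarith
  obtain ⟨v, hvv, hv⟩ := exists_unit F a ha
  obtain ⟨w, hww, hw⟩ := exists_unit F (-a) hb
  obtain ⟨ε, hε, hmin⟩ := hs
  have hv' : v ᵥ* F = a • v := by rw [← Matrix.mulVec_transpose, hF, hv]
  have hw' : w ᵥ* F = (-a) • w := by rw [← Matrix.mulVec_transpose, hF, hw]
  have hvw : v ⬝ᵥ w = 0 := by
    have h1 : v ⬝ᵥ (F *ᵥ w) = (v ᵥ* F) ⬝ᵥ w := Matrix.dotProduct_mulVec _ _ _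
    rw [hw, hv', dotProduct_smul, smul_dotProduct, smul_eq_mul, smul_eq_mul] at h1
    have : a * (v ⬝ᵥ w) = 0 := by linarith
    exact (mul_eq_zero.mp this).resolve_left ha0
  have hwv : w ⬝ᵥ v = 0 := by rw [dotProduct_comm, hvw]
  let A := vecMulVec v v - vecMulVec w w
  let B := vecMulVec v w + vecMulVec w v
  let P := vecMulVec v v + vecMulVec w w
  have hFA : F * A = a • P := by
    simp only [A, P, Matrix.mul_sub, mul_vecMulVec, hv, hw, smul_vecMulVec, smul_add, neg_smul,
      neg_vecMulVec, sub_neg_eq_add]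
  have hAF : A * F = a • P := by
    simp only [A, P, Matrix.sub_mul, vecMulVec_mul, hv', hw', vecMulVec_smul, smul_add, neg_smul,
      vecMulVec_neg, sub_neg_eq_add]
  have hFB : F * B = a • (vecMulVec v w - vecMulVec w v) := by
    simp only [B, Matrix.mul_add, mul_vecMulVec, hv, hw, smul_vecMulVec, neg_smul,
      neg_vecMulVec, sub_eq_add_neg, smul_add, smul_neg]
  have hBF : B * F = -(a • (vecMulVec v w - vecMulVec w v)) := by
    simp only [B, Matrix.add_mul, vecMulVec_mul, hv', hw', vecMulVec_smul, smul_sub, neg_smul,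
      vecMulVec_neg, neg_sub]
    abel
  have hAA : A * A = P := by
    simp [A, P, Matrix.mul_sub, Matrix.sub_mul, vecMulVec_mul_vecMulVec, hvv, hww, hvw, hwv]
  have hBB : B * B = P := by
    simp [B, P, Matrix.mul_add, Matrix.add_mul, vecMulVec_mul_vecMulVec, hvv, hww, hvw, hwv,
      add_comm]
  have hABBA : A * B + B * A = 0 := by
    simp [A, B, Matrix.mul_add, Matrix.add_mul, Matrix.mul_sub, Matrix.sub_mul,
      vecMulVec_mul_vecMulVec, hvv, hww, hvw, hwv]
    abel
  let G : ℝ → Matrix (Fin d) (Fin d) ℝ := fun t =>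
    F + ((a * (Real.cos t - 1)) • A + (a * Real.sin t) • B)
  have hGs : ∀ t, (G t).IsSymm := by
    intro t
    have h1 : Aᵀ = A := by simp [A, transpose_vecMulVec]
    have h2 : Bᵀ = B := by simp [B, transpose_vecMulVec, add_comm]
    simp [G, Matrix.IsSymm, h1, h2, hF.eq]
  have hGG : ∀ t, G t * G t = F * F := by
    intro t
    set x := a * (Real.cos t - 1) with hx
    set y := a * Real.sin t with hy
    have e : G t * G t = F * F + x • (F * A + A * F) + y • (F * B + B * F) + (x * x) • (A * A)
        + (y * y) • (B * B) + (x * y) • (A * B + B * A) := by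
      simp only [G, ← hx, ← hy, Matrix.mul_add, Matrix.add_mul, Matrix.smul_mul, Matrix.mul_smul,
        smul_add, smul_smul]
      rw [mul_comm y x]
      abel
    rw [e, hFA, hAF, hFB, hBF, hAA, hBB, hABBA]
    have e2 : 2 * x * a + x * x + y * y = 0 := by
      have := Real.sin_sq_add_cos_sq t
      rw [hx, hy]; linear_combination a ^ 2 * this
    have : F * F + x • (a • P + a • P) + y • (a • (vecMulVec v w - vecMulVec w v) +
        -(a • (vecMulVec v w - vecMulVec w v))) + (x * x) • P + (y * y) • P +
        (x * y) • (0 : Matrix (Fin d) (Fin d) ℝ) = F * F + (2 * x * a + x * x + y * y) • P := by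
      module
    rw [this, e2, zero_smul, add_zero]
  have hGc : Continuous G := by
    simp only [G]; fun_prop
  have hG0 : G 0 = F := by simp [G]
  have hfl : Filter.Tendsto (fun t => frob (G t - F)) (nhds 0) (nhds 0) := by
    have hc : Continuous (fun t => frob (G t - F)) :=
      (continuous_frob d).comp (hGc.sub continuous_const)
    have := hc.tendsto 0
    rwa [hG0, sub_self, frob_zero] at this
  have hev := hfl.eventually_lt_const hε
  obtain ⟨r, hr, hball⟩ := Metric.eventually_nhds_iff.mp hev
  let t := min (r / 2) 1
  have ht0 : 0 < t := lt_min (by linarith) one_pos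
  have htr : t < r := lt_of_le_of_lt (min_le_left _ _) (by linarith)
  have ht1 : t ≤ 1 := min_le_right _ _
  have hsin : 0 < Real.sin t := Real.sin_pos_of_pos_of_le_one ht0 ht1
  have hlt := hmin (G t) (hGs t)
    (hball (by rw [Real.dist_eq, sub_zero, abs_of_pos ht0]; exact htr)).le ?_
  · rw [hGG] at hlt; exact lt_irrefl _ hlt
  · intro hGF
    have h1 : (a * (Real.cos t - 1)) • A + (a * Real.sin t) • B = 0 := by
      simpa [G] using hGF
    have h2 : v ⬝ᵥ (((a * (Real.cos t - 1)) • A + (a * Real.sin t) • B) *ᵥ w) = 0 := by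
      rw [h1]; simp
    have h3 : v ⬝ᵥ (((a * (Real.cos t - 1)) • A + (a * Real.sin t) • B) *ᵥ w)
        = a * Real.sin t := by
      simp [A, B, Matrix.add_mulVec, Matrix.sub_mulVec, Matrix.smul_mulVec, vecMulVec_mulVec,
        hvv, hww, hvw, hwv]
    rw [h3] at h2
    exact (mul_ne_zero ha0 hsin.ne') h2

/-- If `F ∈ S^d` is a local minimizer of (DSS-Sym) satisfying the eigenvalue condition
(EC), then `X = F²` is a local minimizer of (BC); if `F` is a strict local minimizer of
(DSS-Sym), then `X = F²` is a strict local minimizer of (BC). -/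
theorem statement15 {d : ℕ} (h : Matrix (Fin d) (Fin d) ℝ → ℝ) (hcont : Continuous h)
    (F : Matrix (Fin d) (Fin d) ℝ) (hFsymm : F.IsSymm) :
    (DSSSymLocalMin h F → EigCond F → BCLocalMin h (F * F)) ∧
    (DSSSymStrictLocalMin h F → BCStrictLocalMin h (F * F)) := by
  have hpsd : (F * F).PosSemidef := by
    have h1 := Matrix.posSemidef_conjTranspose_mul_self F
    rwa [Matrix.conjTranspose_eq_transpose_of_trivial, hFsymm.eq] at h1
  constructor
  · rintro ⟨ε, hε, hmin⟩ hE
    obtain ⟨δ, hδ, hk⟩ := key F hFsymm hE ε hε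
    refine ⟨hpsd, δ, hδ, fun X' hX' hd => ?_⟩
    obtain ⟨G, hG, hGF, rfl⟩ := hk X' hX' hd
    exact hmin G hG hGF
  · intro hs
    have hE := strict_ec h F hFsymm hs
    obtain ⟨ε, hε, hmin⟩ := hs
    obtain ⟨δ, hδ, hk⟩ := key F hFsymm hE ε hε
    refine ⟨hpsd, δ, hδ, fun X' hX' hd hne => ?_⟩
    obtain ⟨G, hG, hGF, rfl⟩ := hk X' hX' hd
    exact hmin G hG hGF (fun h => hne (by rw [h]))
end
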